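/- There exist a continuous function 𝓔 : [0,∞) → ℝ and a constant C > 0 with |𝓔(x)| ≤ C·x for all x ∈ [0,1], such that for all primes a, q ≥ 2 with a ≠ q one has M(a,q) − M(−q,a) = (q/a)^{1/2}·(log(q/a) + γ − log(8π)) + ζ(1/2)²·(1 − 2·(q^{1/2}/φ(q))·(1 − q^{−1/2}) + 2·(a^{1/2}/φ(a))·(1 − a^{−1/2})) + 𝓔(a/q). -/

import Mathlib

open Complex Real Finset

open scoped Classical in
/-- `M(a,q)`: the twisted second moment of Dirichlet `L`-functions at the central point,
summed over the primitive (= nontrivial, for prime `q`) characters mod `q`. -/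
noncomputable def Mtw (a : ℤ) (q : ℕ) [NeZero q] : ℂ :=
  (Real.sqrt q / (Nat.totient q : ℝ)) *
    ∑ χ : DirichletCharacter ℂ q, if χ = 1 then 0 else
      (‖χ.LFunction (1/2)‖^2 : ℂ) * χ (a : ZMod q)

namespace RecipAux
open MeasureTheory Set Filter Topology

/-- The function whose Riemann-sum defect is the error term. -/
noncomputable def G (s : ℂ) (y t : ℝ) : ℂ :=
  (t : ℂ) ^ (-s) * (((t + y : ℝ) : ℂ) ^ (-s) - (y : ℂ) ^ (-s))

/-- First derivative of `G` in `t`. -/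
noncomputable def G1 (s : ℂ) (y t : ℝ) : ℂ :=
  (-s * (t : ℂ) ^ (-s - 1)) * (((t + y : ℝ) : ℂ) ^ (-s) - (y : ℂ) ^ (-s))
    + (t : ℂ) ^ (-s) * (-s * ((t + y : ℝ) : ℂ) ^ (-s - 1))

/-- Second derivative of `G` in `t`. -/
noncomputable def G2 (s : ℂ) (y t : ℝ) : ℂ :=
  (-s * ((-s - 1) * (t : ℂ) ^ (-s - 2))) * (((t + y : ℝ) : ℂ) ^ (-s) - (y : ℂ) ^ (-s))
    + 2 * ((-s * (t : ℂ) ^ (-s - 1)) * (-s * ((t + y : ℝ) : ℂ) ^ (-s - 1)))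
    + (t : ℂ) ^ (-s) * (-s * ((-s - 1) * ((t + y : ℝ) : ℂ) ^ (-s - 2)))

lemma hasDerivAt_cpow_real (r : ℂ) {t : ℝ} (ht : 0 < t) :
    HasDerivAt (fun t : ℝ => (t : ℂ) ^ r) (r * (t : ℂ) ^ (r - 1)) t := by
  have h := (hasDerivAt_id (t : ℂ)).cpow_const (c := r) (by
    left; simpa using ht)
  have h2 := h.comp_ofReal
  simpa using h2

lemma hasDerivAt_cpow_shift (r : ℂ) {t y : ℝ} (ht : 0 < t + y) :
    HasDerivAt (fun t : ℝ => ((t + y : ℝ) : ℂ) ^ r) (r * ((t + y : ℝ) : ℂ) ^ (r - 1)) t := by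
  have h := hasDerivAt_cpow_real r ht
  exact h.comp_add_const t y

lemma hasDerivAt_G (s : ℂ) {y t : ℝ} (hy : 0 < y) (ht : 0 < t) :
    HasDerivAt (G s y) (G1 s y t) t := by
  have h1 := hasDerivAt_cpow_real (-s) ht
  have h2 := (hasDerivAt_cpow_shift (-s) (add_pos ht hy)).sub_const ((y : ℂ) ^ (-s))
  exact h1.mul h2

lemma hasDerivAt_G1 (s : ℂ) {y t : ℝ} (hy : 0 < y) (ht : 0 < t) :
    HasDerivAt (G1 s y) (G2 s y t) t := by
  have h0 := hasDerivAt_cpow_real (-s) ht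
  have h1 := (hasDerivAt_cpow_real (-s - 1) ht).const_mul (-s)
  have h2 := (hasDerivAt_cpow_shift (-s) (add_pos ht hy)).sub_const ((y : ℂ) ^ (-s))
  have h3 := (hasDerivAt_cpow_shift (-s - 1) (add_pos ht hy)).const_mul (-s)
  have h4 := (h1.mul h2).add (h0.mul h3)
  refine h4.congr_deriv ?_
  unfold G2
  have e : -s - 1 - 1 = -s - 2 := by ring
  rw [e]
  ring

lemma norm_cpow_real (r : ℂ) {t : ℝ} (ht : 0 < t) : ‖(t : ℂ) ^ r‖ = t ^ r.re :=
  Complex.norm_cpow_eq_rpow_re_of_pos ht r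

lemma norm_cpow_diff_le (s : ℂ) (hs : 0 < s.re) {y t : ℝ} (hy : 0 < y) (ht : 0 ≤ t) :
    ‖((t + y : ℝ) : ℂ) ^ (-s) - (y : ℂ) ^ (-s)‖ ≤ ‖s‖ * y ^ (-s.re - 1) * t := by
  have h := Convex.norm_image_sub_le_of_norm_hasDerivWithin_le (s := Set.Ici y)
    (f := fun t : ℝ => (t : ℂ) ^ (-s)) (f' := fun u => -s * (u : ℂ) ^ (-s - 1))
    (C := ‖s‖ * y ^ (-s.re - 1)) (x := y) (y := t + y)
    (fun x hx => (hasDerivAt_cpow_real (-s) (lt_of_lt_of_le hy hx)).hasDerivWithinAt)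
    (fun x hx => by
      have hx0 : 0 < x := lt_of_lt_of_le hy hx
      rw [norm_mul, norm_neg, norm_cpow_real _ hx0]
      gcongr
      have : (-s - 1).re = -s.re - 1 := by simp
      rw [this]
      exact Real.rpow_le_rpow_of_nonpos hy hx (by linarith))
    (convex_Ici y) self_mem_Ici (by simp [ht])
  simpa [abs_of_nonneg ht] using h

lemma norm_G_le (s : ℂ) (hs : 0 < s.re) {y t : ℝ} (hy : 0 < y) (ht : 0 < t) :
    ‖G s y t‖ ≤ ‖s‖ * y ^ (-s.re - 1) * t ^ (1 - s.re) := by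
  unfold G
  rw [norm_mul, norm_cpow_real _ ht]
  calc t ^ (-s).re * ‖((t + y : ℝ) : ℂ) ^ (-s) - (y : ℂ) ^ (-s)‖
      ≤ t ^ (-s).re * (‖s‖ * y ^ (-s.re - 1) * t) := by
        gcongr; exact norm_cpow_diff_le s hs hy ht.le
    _ = ‖s‖ * y ^ (-s.re - 1) * (t ^ (-s.re) * t) := by simp; ring
    _ = _ := by
        rw [← Real.rpow_add_one ht.ne']; ring_nf

lemma norm_G2_le (s : ℂ) (hs : 0 < s.re) {y t : ℝ} (hy : 0 < y) (ht : 0 < t) :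
    ‖G2 s y t‖ ≤ (‖s‖ * (‖s‖ + 1) * ‖s‖ + 2 * (‖s‖ * ‖s‖) + ‖s‖ * (‖s‖ + 1)) *
      (y ^ (-s.re - 1) * t ^ (-s.re - 1)) := by
  have hty : 0 < t + y := by positivity
  have hn : ‖-s - 1‖ ≤ ‖s‖ + 1 := by
    have := norm_sub_le (-s) 1
    simpa using this
  unfold G2
  have A : ‖(-s * ((-s - 1) * (t : ℂ) ^ (-s - 2))) * (((t + y : ℝ) : ℂ) ^ (-s) - (y : ℂ) ^ (-s))‖
      ≤ ‖s‖ * (‖s‖ + 1) * ‖s‖ * (y ^ (-s.re - 1) * t ^ (-s.re - 1)) := by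
    rw [norm_mul, norm_mul, norm_mul, norm_neg, norm_cpow_real _ ht]
    have e : t ^ (-s.re - 1) = t ^ (-s.re - 2) * t := by
      rw [← Real.rpow_add_one ht.ne']; ring_nf
    have e2 : (-s - 2).re = -s.re - 2 := by simp
    rw [e, e2]
    calc ‖s‖ * (‖-s - 1‖ * t ^ (-s.re - 2)) * ‖((t + y : ℝ) : ℂ) ^ (-s) - (y : ℂ) ^ (-s)‖
        ≤ ‖s‖ * ((‖s‖ + 1) * t ^ (-s.re - 2)) * (‖s‖ * y ^ (-s.re - 1) * t) := by
          gcongr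
          exact norm_cpow_diff_le s hs hy ht.le
      _ = _ := by ring
  have hy1 : (t + y) ^ (-s.re - 1) ≤ y ^ (-s.re - 1) :=
    Real.rpow_le_rpow_of_nonpos hy (by linarith) (by linarith)
  have B : ‖2 * ((-s * (t : ℂ) ^ (-s - 1)) * (-s * ((t + y : ℝ) : ℂ) ^ (-s - 1)))‖
      ≤ 2 * (‖s‖ * ‖s‖) * (y ^ (-s.re - 1) * t ^ (-s.re - 1)) := by
    rw [norm_mul, norm_mul, norm_mul, norm_mul, norm_neg, norm_cpow_real _ ht, norm_cpow_real _ hty]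
    have e2 : (-s - 1).re = -s.re - 1 := by simp
    rw [e2, Complex.norm_ofNat]
    calc 2 * (‖s‖ * t ^ (-s.re - 1) * (‖s‖ * (t + y) ^ (-s.re - 1)))
        ≤ 2 * (‖s‖ * t ^ (-s.re - 1) * (‖s‖ * y ^ (-s.re - 1))) := by gcongr
      _ = _ := by ring
  have C : ‖(t : ℂ) ^ (-s) * (-s * ((-s - 1) * ((t + y : ℝ) : ℂ) ^ (-s - 2)))‖
      ≤ ‖s‖ * (‖s‖ + 1) * (y ^ (-s.re - 1) * t ^ (-s.re - 1)) := by
    rw [norm_mul, norm_mul, norm_mul, norm_neg, norm_cpow_real _ ht, norm_cpow_real _ hty]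
    have e2 : (-s - 2).re = -s.re - 2 := by simp
    have e3 : (-s).re = -s.re := by simp
    rw [e2, e3]
    have e : (t + y) ^ (-s.re - 2) ≤ y ^ (-s.re - 1) * t⁻¹ := by
      have : -s.re - 2 = (-s.re - 1) + (-1) := by ring
      rw [this, Real.rpow_add hty, Real.rpow_neg_one]
      gcongr
      linarith
    have e4 : t ^ (-s.re - 1) = t ^ (-s.re) * t⁻¹ := by
      rw [← Real.rpow_neg_one, ← Real.rpow_add ht]; ring_nf
    rw [e4]
    calc t ^ (-s.re) * (‖s‖ * (‖-s - 1‖ * (t + y) ^ (-s.re - 2)))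
        ≤ t ^ (-s.re) * (‖s‖ * ((‖s‖ + 1) * (y ^ (-s.re - 1) * t⁻¹))) := by gcongr
      _ = _ := by ring
  calc _ ≤ _ := norm_add₃_le
    _ ≤ _ := add_le_add (add_le_add A B) C
    _ = _ := by ring

/-- The trapezoid kernel. -/
noncomputable def wk (u : ℝ) : ℝ := Int.fract u * (1 - Int.fract u) / 2

lemma wk_nonneg (u : ℝ) : 0 ≤ wk u := by
  unfold wk
  have := Int.fract_nonneg u
  have := (Int.fract_lt_one u).le
  have : 0 ≤ 1 - Int.fract u := by linarith
  positivity

lemma wk_le (u : ℝ) : wk u ≤ 1 := by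
  unfold wk
  have := Int.fract_nonneg u
  have := (Int.fract_lt_one u).le
  nlinarith

lemma measurable_wk : Measurable wk := by
  unfold wk
  exact ((measurable_fract).mul (measurable_const.sub measurable_fract)).div_const 2

lemma wk_add_one (u : ℝ) : wk (u + 1) = wk u := by
  unfold wk; simp

/-- the defect -/
noncomputable def v (s : ℂ) (θ y : ℝ) : ℂ :=
  G s y θ + G s y (1 + θ) / 2 - (∫ t in (0:ℝ)..(1 + θ), G s y t)
    + ∫ u in Set.Ioi (1:ℝ), (wk u : ℂ) * G2 s y (u + θ)

lemma continuousOn_G (s : ℂ) {y : ℝ} (hy : 0 < y) : ContinuousOn (G s y) (Set.Ioi 0) :=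
  fun t ht => (hasDerivAt_G s hy ht).continuousAt.continuousWithinAt

lemma continuousOn_G1 (s : ℂ) {y : ℝ} (hy : 0 < y) : ContinuousOn (G1 s y) (Set.Ioi 0) :=
  fun t ht => (hasDerivAt_G1 s hy ht).continuousAt.continuousWithinAt

lemma continuousOn_G2 (s : ℂ) {y : ℝ} (hy : 0 < y) : ContinuousOn (G2 s y) (Set.Ioi 0) := by
  have h : ∀ r : ℂ, ContinuousOn (fun t : ℝ => (t : ℂ) ^ r) (Set.Ioi 0) := fun r t ht =>
    (hasDerivAt_cpow_real r ht).continuousAt.continuousWithinAt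
  have h' : ∀ r : ℂ, ContinuousOn (fun t : ℝ => ((t + y : ℝ) : ℂ) ^ r) (Set.Ioi 0) := fun r t ht =>
    (hasDerivAt_cpow_shift r (add_pos ht hy)).continuousAt.continuousWithinAt
  unfold G2
  have a1 := h (-s - 2)
  have a2 := h (-s - 1)
  have a3 := h (-s)
  have b1 := h' (-s - 2)
  have b2 := h' (-s - 1)
  have b3 := h' (-s)
  exact (((continuousOn_const.mul (continuousOn_const.mul a1)).mul (b3.sub continuousOn_const)).add
    (continuousOn_const.mul ((continuousOn_const.mul a2).mul (continuousOn_const.mul b2)))).add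
    (a3.mul (continuousOn_const.mul (continuousOn_const.mul b1)))

end RecipAux

namespace RecipAux
open MeasureTheory Set Filter Topology

lemma intervalIntegrable_G (s : ℂ) (hs : 0 < s.re) (hs2 : s.re < 2) {y b : ℝ} (hy : 0 < y)
    (hb : 0 ≤ b) : IntervalIntegrable (G s y) volume 0 b := by
  have h : IntervalIntegrable (fun t : ℝ => ‖s‖ * y ^ (-s.re - 1) * t ^ (1 - s.re)) volume 0 b :=
    (intervalIntegral.intervalIntegrable_rpow' (by linarith)).const_mul _
  rw [intervalIntegrable_iff_integrableOn_Ioc_of_le hb] at h ⊢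
  refine Integrable.mono' h ?_ ?_
  · exact ((continuousOn_G s hy).mono (fun t ht => ht.1)).aestronglyMeasurable measurableSet_Ioc
  · filter_upwards [ae_restrict_mem measurableSet_Ioc] with t ht
    exact norm_G_le s hs hy ht.1

/-- constant in the bound for `G2` -/
noncomputable def cG (s : ℂ) : ℝ :=
  ‖s‖ * (‖s‖ + 1) * ‖s‖ + 2 * (‖s‖ * ‖s‖) + ‖s‖ * (‖s‖ + 1)

lemma cG_nonneg (s : ℂ) : 0 ≤ cG s := by unfold cG; positivity

lemma norm_wG2_le (s : ℂ) (hs : 0 < s.re) {y θ u : ℝ} (hy : 0 < y) (hθ : 0 ≤ θ) (hu : 1 < u) :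
    ‖(wk u : ℂ) * G2 s y (u + θ)‖ ≤ cG s * y ^ (-s.re - 1) * u ^ (-s.re - 1) := by
  have hu0 : 0 < u := by linarith
  rw [norm_mul, Complex.norm_real, Real.norm_of_nonneg (wk_nonneg u)]
  have h1 : (u + θ) ^ (-s.re - 1) ≤ u ^ (-s.re - 1) :=
    Real.rpow_le_rpow_of_nonpos hu0 (by linarith) (by linarith)
  calc wk u * ‖G2 s y (u + θ)‖ ≤ 1 * (cG s * (y ^ (-s.re - 1) * (u + θ) ^ (-s.re - 1))) := by
        gcongr
        · exact wk_le u
        · exact norm_G2_le s hs hy (by linarith)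
    _ ≤ 1 * (cG s * (y ^ (-s.re - 1) * u ^ (-s.re - 1))) := by
        have := cG_nonneg s
        gcongr
    _ = _ := by ring

lemma aesm_wG2 (s : ℂ) {y θ : ℝ} (hy : 0 < y) (hθ : 0 ≤ θ) :
    AEStronglyMeasurable (fun u : ℝ => (wk u : ℂ) * G2 s y (u + θ)) (volume.restrict (Set.Ioi 1)) := by
  refine AEStronglyMeasurable.mul ?_ ?_
  · exact (Complex.measurable_ofReal.comp measurable_wk).aestronglyMeasurable
  · refine ContinuousOn.aestronglyMeasurable ?_ measurableSet_Ioi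
    refine (continuousOn_G2 s hy).comp (by fun_prop) ?_
    intro u hu
    have : (1:ℝ) < u := hu
    show (0:ℝ) < u + θ
    linarith

lemma integrableOn_wG2 (s : ℂ) (hs : 0 < s.re) {y θ : ℝ} (hy : 0 < y) (hθ : 0 ≤ θ) :
    IntegrableOn (fun u : ℝ => (wk u : ℂ) * G2 s y (u + θ)) (Set.Ioi 1) := by
  have h : IntegrableOn (fun u : ℝ => cG s * y ^ (-s.re - 1) * u ^ (-s.re - 1)) (Set.Ioi 1) :=
    (integrableOn_Ioi_rpow_of_lt (by linarith) one_pos).const_mul _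
  refine Integrable.mono' h (aesm_wG2 s hy hθ) ?_
  filter_upwards [ae_restrict_mem measurableSet_Ioi] with u hu
  exact norm_wG2_le s hs hy hθ hu

lemma norm_v_le (s : ℂ) (hs : 0 < s.re) (hs2 : s.re < 2) {θ y : ℝ} (hy : 0 < y) (hθ : 0 < θ)
    (hθ1 : θ ≤ 1) :
    ‖v s θ y‖ ≤ (‖s‖ * (θ ^ (1 - s.re) + 1 + 4 / (2 - s.re)) + cG s / s.re) *
      y ^ (-s.re - 1) := by
  have h1 := norm_G_le s hs hy hθ
  have hp : (1 + θ) ^ (1 - s.re) ≤ 2 := by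
    calc (1 + θ) ^ (1 - s.re) ≤ (1 + θ) ^ (1:ℝ) :=
          Real.rpow_le_rpow_of_exponent_le (by linarith) (by linarith)
      _ ≤ 2 := by rw [Real.rpow_one]; linarith
  have hp2 : (1 + θ) ^ (2 - s.re) ≤ 4 := by
    calc (1 + θ) ^ (2 - s.re) ≤ (1 + θ) ^ (2:ℝ) :=
          Real.rpow_le_rpow_of_exponent_le (by linarith) (by linarith)
      _ ≤ 4 := by rw [Real.rpow_two]; nlinarith
  have hY : 0 ≤ y ^ (-s.re - 1) := by positivity
  have h2 : ‖G s y (1 + θ) / 2‖ ≤ ‖s‖ * y ^ (-s.re - 1) := by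
    rw [norm_div, Complex.norm_ofNat]
    have := norm_G_le s hs hy (show 0 < 1 + θ by linarith)
    have : ‖G s y (1 + θ)‖ ≤ ‖s‖ * y ^ (-s.re - 1) * 2 := this.trans (by gcongr)
    linarith
  have h3 : ‖∫ t in (0:ℝ)..(1 + θ), G s y t‖ ≤ ‖s‖ * y ^ (-s.re - 1) * (4 / (2 - s.re)) := by
    have hb : 0 ≤ 1 + θ := by linarith
    have := intervalIntegral.norm_integral_le_of_norm_le (f := G s y) (μ := volume) (a := 0)
      (b := 1 + θ) (g := fun t : ℝ => ‖s‖ * y ^ (-s.re - 1) * t ^ (1 - s.re)) hb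
      (Eventually.of_forall fun t ht => norm_G_le s hs hy ht.1)
      ((intervalIntegral.intervalIntegrable_rpow' (by linarith)).const_mul _)
    refine this.trans ?_
    rw [intervalIntegral.integral_const_mul, integral_rpow (Or.inl (by linarith))]
    have e : (1 - s.re + 1) = 2 - s.re := by ring
    rw [e, Real.zero_rpow (by linarith), sub_zero]
    have : 0 < 2 - s.re := by linarith
    gcongr
  have h4 : ‖∫ u in Set.Ioi (1:ℝ), (wk u : ℂ) * G2 s y (u + θ)‖ ≤ cG s * y ^ (-s.re - 1) * (1 / s.re) := by
    have h : IntegrableOn (fun u : ℝ => cG s * y ^ (-s.re - 1) * u ^ (-s.re - 1)) (Set.Ioi 1) :=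
      (integrableOn_Ioi_rpow_of_lt (by linarith) one_pos).const_mul _
    have := norm_integral_le_of_norm_le h (f := fun u : ℝ => (wk u : ℂ) * G2 s y (u + θ)) (by
      filter_upwards [ae_restrict_mem measurableSet_Ioi] with u hu
      exact norm_wG2_le s hs hy hθ.le hu)
    refine this.trans ?_
    rw [integral_const_mul, integral_Ioi_rpow_of_lt (by linarith) one_pos]
    refine le_of_eq ?_
    congr 1
    rw [Real.one_rpow]
    have : -s.re - 1 + 1 = -s.re := by ring
    rw [this, neg_div_neg_eq]
  unfold v
  calc _ ≤ ‖G s y θ‖ + ‖G s y (1 + θ) / 2‖ + ‖∫ t in (0:ℝ)..(1 + θ), G s y t‖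
        + ‖∫ u in Set.Ioi (1:ℝ), (wk u : ℂ) * G2 s y (u + θ)‖ := by
        refine (norm_add_le _ _).trans ?_
        gcongr
        refine (norm_sub_le _ _).trans ?_
        gcongr
        exact norm_add_le _ _
    _ ≤ ‖s‖ * y ^ (-s.re - 1) * θ ^ (1 - s.re) + ‖s‖ * y ^ (-s.re - 1)
        + ‖s‖ * y ^ (-s.re - 1) * (4 / (2 - s.re)) + cG s * y ^ (-s.re - 1) * (1 / s.re) := by
        gcongr
    _ = _ := by ring

/-- Holomorphy of parametric integrals. -/
lemma differentiableAt_integral {μ : Measure ℝ} {F : ℂ → ℝ → ℂ} {s₀ : ℂ} {r : ℝ} (hr : 0 < r)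
    {bound : ℝ → ℝ}
    (hmeas : ∀ s ∈ Metric.ball s₀ r, AEStronglyMeasurable (F s) μ)
    (hd : ∀ᵐ t ∂μ, DifferentiableOn ℂ (fun s => F s t) (Metric.ball s₀ r))
    (hb : ∀ᵐ t ∂μ, ∀ s ∈ Metric.ball s₀ r, ‖F s t‖ ≤ bound t)
    (hbi : Integrable bound μ) :
    DifferentiableAt ℂ (fun s => ∫ t, F s t ∂μ) s₀ := by
  have hs₀ : s₀ ∈ Metric.ball s₀ r := Metric.mem_ball_self hr
  have hder : ∀ᵐ t ∂μ, ∀ s ∈ Metric.ball s₀ (r / 2),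
      HasDerivAt (fun s => F s t) (deriv (fun s => F s t) s) s := by
    filter_upwards [hd] with t ht s hs
    exact (ht.differentiableAt (Metric.isOpen_ball.mem_nhds
      (Metric.ball_subset_ball (by linarith) hs))).hasDerivAt
  refine (hasDerivAt_integral_of_dominated_loc_of_deriv_le (μ := μ) (𝕜 := ℂ) (F := F)
    (F' := fun s t => deriv (fun s => F s t) s) (x₀ := s₀)
    (s := Metric.ball s₀ (r / 2)) (bound := fun t => bound t / (r / 4))
    (Metric.ball_mem_nhds _ (by linarith)) ?_ ?_ ?_ ?_ ?_ hder).2.differentiableAt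
  · filter_upwards [Metric.ball_mem_nhds s₀ hr] with s hs using hmeas s hs
  · refine Integrable.mono' hbi (hmeas s₀ hs₀) ?_
    filter_upwards [hb] with t ht using ht s₀ hs₀
  · -- measurability of the derivative
    have hlim : ∀ᵐ t ∂μ, Tendsto (fun n : ℕ =>
        ((r / 2 / (n + 1) : ℝ) : ℂ)⁻¹ • (F (s₀ + ((r / 2 / (n + 1) : ℝ) : ℂ)) t - F s₀ t)) atTop
        (𝓝 (deriv (fun s => F s t) s₀)) := by
      filter_upwards [hder] with t ht
      have h1 := (ht s₀ (Metric.mem_ball_self (by linarith))).tendsto_slope_zero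
      refine h1.comp ?_
      refine tendsto_nhdsWithin_iff.mpr ⟨?_, ?_⟩
      · have : Tendsto (fun n : ℕ => (r / 2 / (n + 1) : ℝ)) atTop (𝓝 0) := by
          have := (tendsto_one_div_add_atTop_nhds_zero_nat (𝕜 := ℝ)).const_mul (r / 2)
          simpa [div_eq_mul_inv] using this
        exact_mod_cast (Complex.continuous_ofReal.tendsto 0).comp this
      · refine Eventually.of_forall fun n => ?_
        have : (r / 2 / (n + 1) : ℝ) ≠ 0 := by positivity
        exact Complex.ofReal_ne_zero.mpr this
    refine aestronglyMeasurable_of_tendsto_ae atTop (fun n => ?_) hlim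
    have hmm : s₀ + ((r / 2 / (n + 1) : ℝ) : ℂ) ∈ Metric.ball s₀ r := by
      rw [Metric.mem_ball, dist_eq_norm, add_sub_cancel_left, Complex.norm_real,
        Real.norm_of_nonneg (by positivity)]
      have : r / 2 / ((n:ℝ) + 1) ≤ r / 2 := div_le_self (by linarith) (by
        have : (0:ℝ) ≤ n := Nat.cast_nonneg n
        linarith)
      linarith
    exact ((hmeas _ hmm).sub (hmeas _ hs₀)).const_smul (((r / 2 / (n + 1) : ℝ) : ℂ)⁻¹)
  · filter_upwards [hd, hb] with t ht hbt s hs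
    refine Complex.norm_deriv_le_of_forall_mem_sphere_norm_le (by linarith) ?_ ?_
    · refine (ht.mono ?_).diffContOnCl_ball (U := Metric.ball s₀ r) ?_
      · exact subset_rfl
      · intro z hz
        rw [Metric.mem_closedBall] at hz
        rw [Metric.mem_ball] at hs ⊢
        have := dist_triangle z s s₀
        linarith
    · intro z hz
      refine hbt z ?_
      rw [Metric.mem_sphere] at hz
      rw [Metric.mem_ball] at hs ⊢
      have := dist_triangle z s s₀
      linarith
  · exact hbi.div_const _

end RecipAux

namespace RecipAux
open MeasureTheory Set Filter Topology

lemma rpow_le_add {t p e q : ℝ} (ht : 0 < t) (h1 : p ≤ e) (h2 : e ≤ q) :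
    t ^ e ≤ t ^ p + t ^ q := by
  have hp : 0 ≤ t ^ p := by positivity
  have hq : 0 ≤ t ^ q := by positivity
  rcases le_total 1 t with h | h
  · have := Real.rpow_le_rpow_of_exponent_le h h2
    linarith
  · have := Real.rpow_le_rpow_of_exponent_ge ht h h1
    linarith

lemma differentiable_cpow_neg {t : ℝ} (ht : 0 < t) (c : ℂ) :
    Differentiable ℂ (fun s : ℂ => (t : ℂ) ^ (-s - c)) := by
  intro s
  refine DifferentiableAt.const_cpow (by fun_prop) (Or.inl ?_)
  exact_mod_cast ht.ne'

lemma differentiable_cpow_neg' {t : ℝ} (ht : 0 < t) :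
    Differentiable ℂ (fun s : ℂ => (t : ℂ) ^ (-s)) := by
  simpa using differentiable_cpow_neg ht 0

lemma differentiable_G {y t : ℝ} (hy : 0 < y) (ht : 0 < t) :
    Differentiable ℂ (fun s => G s y t) := by
  unfold G
  exact (differentiable_cpow_neg' ht).mul
    ((differentiable_cpow_neg' (add_pos ht hy)).sub (differentiable_cpow_neg' hy))

lemma differentiable_G2 {y t : ℝ} (hy : 0 < y) (ht : 0 < t) :
    Differentiable ℂ (fun s => G2 s y t) := by
  unfold G2
  have a1 := differentiable_cpow_neg ht 2
  have a2 := differentiable_cpow_neg ht 1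
  have a3 := differentiable_cpow_neg' ht
  have b1 := differentiable_cpow_neg (add_pos ht hy) 2
  have b2 := differentiable_cpow_neg (add_pos ht hy) 1
  have b3 := differentiable_cpow_neg' (add_pos ht hy)
  have c3 := differentiable_cpow_neg' hy
  fun_prop

lemma cG_le {s : ℂ} {R : ℝ} (h : ‖s‖ ≤ R) :
    cG s ≤ R * (R + 1) * R + 2 * (R * R) + R * (R + 1) := by
  have := norm_nonneg s
  have : 0 ≤ R := this.trans h
  unfold cG
  gcongr

lemma re_bounds {s s₀ : ℂ} {r : ℝ} (h : s ∈ Metric.ball s₀ r) :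
    s₀.re - r < s.re ∧ s.re < s₀.re + r ∧ ‖s‖ ≤ ‖s₀‖ + r := by
  rw [Metric.mem_ball, dist_eq_norm] at h
  have h1 := Complex.abs_re_le_norm (s - s₀)
  rw [Complex.sub_re] at h1
  have h2 := abs_lt.mp (lt_of_le_of_lt h1 h)
  have h3 : ‖s‖ ≤ ‖s₀‖ + ‖s - s₀‖ := by
    have := norm_add_le s₀ (s - s₀)
    simpa using this
  refine ⟨by linarith [h2.1], by linarith [h2.2], by linarith⟩

lemma differentiableAt_v {s₀ : ℂ} (hs : 0 < s₀.re) (hs2 : s₀.re < 2) {θ y : ℝ} (hy : 0 < y)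
    (hθ : 0 < θ) : DifferentiableAt ℂ (fun s => v s θ y) s₀ := by
  obtain ⟨r, hr, hr1, hr2⟩ : ∃ r : ℝ, 0 < r ∧ r < s₀.re ∧ s₀.re + r < 2 := by
    refine ⟨min (s₀.re / 2) ((2 - s₀.re) / 2), ?_, ?_, ?_⟩
    · exact lt_min (by linarith) (by linarith)
    · have := min_le_left (s₀.re / 2) ((2 - s₀.re) / 2)
      linarith
    · have := min_le_right (s₀.re / 2) ((2 - s₀.re) / 2)
      linarith
  set a := s₀.re - r with ha
  set b := s₀.re + r with hb
  set R := ‖s₀‖ + r with hR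
  have hR0 : 0 ≤ R := by positivity
  set Y := y ^ (-b - 1) + y ^ (-a - 1) with hY
  have hY0 : 0 ≤ Y := by positivity
  have hYb : ∀ s ∈ Metric.ball s₀ r, y ^ (-s.re - 1) ≤ Y := fun s hsb => by
    obtain ⟨h1, h2, h3⟩ := re_bounds hsb
    exact rpow_le_add hy (by linarith) (by linarith)
  unfold v
  refine DifferentiableAt.add (DifferentiableAt.sub (DifferentiableAt.add
    (differentiable_G hy hθ _) ((differentiable_G hy (by linarith) _).div_const _)) ?_) ?_
  · simp_rw [intervalIntegral.integral_of_le (show (0:ℝ) ≤ 1 + θ by linarith)]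
    refine differentiableAt_integral hr
      (bound := fun t => R * Y * (t ^ (1 - b) + t ^ (1 - a))) ?_ ?_ ?_ ?_
    · intro s _
      exact ((continuousOn_G s hy).mono (fun t ht => ht.1)).aestronglyMeasurable measurableSet_Ioc
    · filter_upwards [ae_restrict_mem measurableSet_Ioc] with t ht
      exact (differentiable_G hy ht.1).differentiableOn
    · filter_upwards [ae_restrict_mem measurableSet_Ioc] with t ht s hsb
      obtain ⟨h1, h2, h3⟩ := re_bounds hsb
      refine (norm_G_le s (by linarith) hy ht.1).trans ?_
      have ht0 : 0 < t := ht.1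
      gcongr
      · exact hYb s hsb
      · exact rpow_le_add ht0 (by linarith) (by linarith)
    · have h1 := (intervalIntegral.intervalIntegrable_rpow' (a := 0) (b := 1 + θ)
        (show -1 < 1 - b by linarith))
      have h2 := (intervalIntegral.intervalIntegrable_rpow' (a := 0) (b := 1 + θ)
        (show -1 < 1 - a by linarith))
      have h3 := (h1.add h2).const_mul (R * Y)
      rw [intervalIntegrable_iff_integrableOn_Ioc_of_le (by linarith)] at h3
      exact h3
  · refine differentiableAt_integral hr
      (bound := fun u => (R * (R + 1) * R + 2 * (R * R) + R * (R + 1)) * Y * u ^ (-a - 1))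
        ?_ ?_ ?_ ?_
    · intro s _
      exact aesm_wG2 s hy hθ.le
    · filter_upwards [ae_restrict_mem measurableSet_Ioi] with u hu
      have : (1:ℝ) < u := hu
      exact ((differentiable_const _).mul (differentiable_G2 hy (by linarith))).differentiableOn
    · filter_upwards [ae_restrict_mem measurableSet_Ioi] with u hu s hsb
      obtain ⟨h1, h2, h3⟩ := re_bounds hsb
      have hu1 : (1:ℝ) < u := hu
      refine (norm_wG2_le s (by linarith) hy hθ.le hu).trans ?_
      gcongr
      · exact cG_le h3
      · exact hYb s hsb
      · exact hu1.le
    · exact (integrableOn_Ioi_rpow_of_lt (by linarith) one_pos).const_mul _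

/-- the distance from `y` up to the next integer (in `(0,1]`). -/
noncomputable def th (y : ℝ) : ℝ := 1 - Int.fract y

lemma th_pos (y : ℝ) : 0 < th y := by
  unfold th; have := Int.fract_lt_one y; linarith

lemma th_le (y : ℝ) : th y ≤ 1 := by
  unfold th; have := Int.fract_nonneg y; linarith

/-- One summand of the error term. -/
noncomputable def vv (s : ℂ) (y : ℝ) : ℂ := v s 1 y + v s (th y) y

/-- The error series. -/
noncomputable def W (s : ℂ) (x : ℝ) : ℂ := ∑' l : ℕ, vv s (((l : ℝ) + 1) / x)

lemma th_ge {a q : ℕ} (ha : 0 < a) (l : ℕ) :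
    (1:ℝ) / a ≤ th (((l : ℝ) + 1) / ((a : ℝ) / q)) := by
  rcases Nat.eq_zero_or_pos q with hq | hq
  · subst hq
    simp [th]
    have : (1:ℝ) ≤ a := by exact_mod_cast ha
    exact inv_le_one_of_one_le₀ this
  have ha' : (0:ℝ) < a := by exact_mod_cast ha
  have hq' : (0:ℝ) < q := by exact_mod_cast hq
  set y := ((l : ℝ) + 1) / ((a : ℝ) / q) with hy
  have e : (a:ℝ) * y = (l + 1) * q := by
    rw [hy]; field_simp
  have h0 := th_pos y
  have h1 : (a:ℝ) * th y = ((a * (1 + ⌊y⌋) - (l + 1) * q : ℤ) : ℝ) := by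
    unfold th
    rw [Int.fract]
    push_cast
    rw [← e]; ring
  have h2 : (0:ℝ) < ((a * (1 + ⌊y⌋) - (l + 1) * q : ℤ) : ℝ) := by
    rw [← h1]; positivity
  have h3 : (1:ℤ) ≤ (a * (1 + ⌊y⌋) - (l + 1) * q : ℤ) := by
    have : (0:ℤ) < (a * (1 + ⌊y⌋) - (l + 1) * q : ℤ) := by exact_mod_cast h2
    linarith
  rw [div_le_iff₀ ha', mul_comm, h1]
  exact_mod_cast h3

lemma norm_vv_le {α β R c : ℝ} (hα : 0 < α) (hβ : β < 2) (hc : 0 < c) (hc1 : c ≤ 1)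
    {s : ℂ} (h1 : α < s.re) (h2 : s.re < β) (h3 : ‖s‖ ≤ R) {y : ℝ} (hy : 0 < y)
    (hth : c ≤ th y) :
    ‖vv s y‖ ≤ 2 * (R * (c⁻¹ + 1 + 4 / (2 - β))
      + (R * (R + 1) * R + 2 * (R * R) + R * (R + 1)) / α) * y ^ (-s.re - 1) := by
  have hR : 0 ≤ R := (norm_nonneg s).trans h3
  have key : ∀ θ : ℝ, c ≤ θ → θ ≤ 1 → ‖v s θ y‖ ≤ (R * (c⁻¹ + 1 + 4 / (2 - β))
      + (R * (R + 1) * R + 2 * (R * R) + R * (R + 1)) / α) * y ^ (-s.re - 1) := by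
    intro θ hθ hθ1
    have hθ0 : 0 < θ := by linarith
    refine (norm_v_le s (by linarith) (by linarith) hy hθ0 hθ1).trans ?_
    have e1 : θ ^ (1 - s.re) ≤ c⁻¹ := by
      calc θ ^ (1 - s.re) ≤ θ ^ (-1:ℝ) :=
            Real.rpow_le_rpow_of_exponent_ge hθ0 hθ1 (by linarith)
        _ = θ⁻¹ := Real.rpow_neg_one θ
        _ ≤ c⁻¹ := by gcongr
    have e2 : 4 / (2 - s.re) ≤ 4 / (2 - β) := by
      have : 0 < 2 - β := by linarith
      gcongr
    have e3 := cG_le h3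
    have e4 : 0 ≤ θ ^ (1 - s.re) := by positivity
    have e5 : 0 ≤ 4 / (2 - s.re) := div_nonneg (by norm_num) (by linarith)
    gcongr
  unfold vv
  refine (norm_add_le _ _).trans ?_
  have a1 := key 1 hc1 le_rfl
  have a2 := key _ hth (th_le y)
  linarith

lemma summable_aux {α : ℝ} (hα : 0 < α) : Summable (fun l : ℕ => ((l : ℝ) + 1) ^ (-α - 1)) := by
  have h := (Real.summable_nat_rpow (p := -α - 1)).mpr (by linarith)
  have := (summable_nat_add_iff 1).mpr h
  simpa using this

lemma norm_vv_le' {α β R c : ℝ} (hα : 0 < α) (hβ : β < 2) (hc : 0 < c) (hc1 : c ≤ 1)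
    {s : ℂ} (h1 : α < s.re) (h2 : s.re < β) (h3 : ‖s‖ ≤ R) {x : ℝ} (hx : 0 < x) (l : ℕ)
    (hth : c ≤ th (((l : ℝ) + 1) / x)) :
    ‖vv s (((l : ℝ) + 1) / x)‖ ≤ (2 * (R * (c⁻¹ + 1 + 4 / (2 - β))
      + (R * (R + 1) * R + 2 * (R * R) + R * (R + 1)) / α) * (1 + x ^ (3:ℝ))) *
        ((l : ℝ) + 1) ^ (-α - 1) := by
  have hR : 0 ≤ R := (norm_nonneg s).trans h3
  have hl : (0:ℝ) < (l:ℝ) + 1 := by positivity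
  refine (norm_vv_le hα hβ hc hc1 h1 h2 h3 (div_pos hl hx) hth).trans ?_
  have hβ' : 0 < 2 - β := by linarith
  have e : (((l : ℝ) + 1) / x) ^ (-s.re - 1) ≤ (1 + x ^ (3:ℝ)) * ((l : ℝ) + 1) ^ (-α - 1) := by
    rw [Real.div_rpow hl.le hx.le, div_eq_mul_inv, ← Real.rpow_neg hx.le, mul_comm]
    have e1 : x ^ (-(-s.re - 1)) ≤ 1 + x ^ (3:ℝ) := by
      have := rpow_le_add hx (p := 0) (e := -(-s.re - 1)) (q := 3) (by linarith) (by linarith)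
      simpa using this
    have e2 : ((l:ℝ) + 1) ^ (-s.re - 1) ≤ ((l:ℝ) + 1) ^ (-α - 1) :=
      Real.rpow_le_rpow_of_exponent_le (by linarith [(Nat.cast_nonneg l : (0:ℝ) ≤ l)]) (by linarith)
    gcongr
  calc _ ≤ 2 * (R * (c⁻¹ + 1 + 4 / (2 - β))
      + (R * (R + 1) * R + 2 * (R * R) + R * (R + 1)) / α) *
        ((1 + x ^ (3:ℝ)) * ((l : ℝ) + 1) ^ (-α - 1)) := by gcongr
    _ = _ := by ring

lemma differentiableAt_W {s₀ : ℂ} (hs : 0 < s₀.re) (hs2 : s₀.re < 2) {x c : ℝ} (hx : 0 < x)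
    (hc : 0 < c) (hc1 : c ≤ 1) (hth : ∀ l : ℕ, c ≤ th (((l : ℝ) + 1) / x)) :
    DifferentiableAt ℂ (fun s => W s x) s₀ := by
  obtain ⟨r, hr, hr1, hr2⟩ : ∃ r : ℝ, 0 < r ∧ r < s₀.re ∧ s₀.re + r < 2 := by
    refine ⟨min (s₀.re / 2) ((2 - s₀.re) / 2), ?_, ?_, ?_⟩
    · exact lt_min (by linarith) (by linarith)
    · have := min_le_left (s₀.re / 2) ((2 - s₀.re) / 2)
      linarith
    · have := min_le_right (s₀.re / 2) ((2 - s₀.re) / 2)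
      linarith
  unfold W
  have hα : 0 < s₀.re - r := by linarith
  refine (Complex.differentiableOn_tsum_of_summable_norm
    ((summable_aux hα).mul_left (2 * ((‖s₀‖ + r) * (c⁻¹ + 1 + 4 / (2 - (s₀.re + r)))
      + ((‖s₀‖ + r) * ((‖s₀‖ + r) + 1) * (‖s₀‖ + r) + 2 * ((‖s₀‖ + r) * (‖s₀‖ + r))
      + (‖s₀‖ + r) * ((‖s₀‖ + r) + 1)) / (s₀.re - r)) * (1 + x ^ (3:ℝ))))
    (U := Metric.ball s₀ r) ?_ Metric.isOpen_ball ?_).differentiableAt (Metric.ball_mem_nhds _ hr)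
  · intro l s hsb
    obtain ⟨h1, h2, h3⟩ := re_bounds hsb
    have hy : 0 < ((l:ℝ) + 1) / x := by positivity
    exact ((differentiableAt_v (by linarith) (by linarith) hy one_pos).add
      (differentiableAt_v (by linarith) (by linarith) hy (th_pos _))).differentiableWithinAt
  · intro l s hsb
    obtain ⟨h1, h2, h3⟩ := re_bounds hsb
    exact norm_vv_le' hα hr2 hc hc1 h1 h2 h3 hx l (hth l)

end RecipAux

namespace RecipAux
open MeasureTheory Set Filter Topology

lemma norm_G_le2 (s : ℂ) (hs : 0 < s.re) {y t : ℝ} (hy : 0 < y) (ht : 0 < t) :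
    ‖G s y t‖ ≤ 2 * y ^ (-s.re) * t ^ (-s.re) := by
  unfold G
  rw [norm_mul, norm_cpow_real _ ht]
  have h1 : ‖((t + y : ℝ) : ℂ) ^ (-s) - (y : ℂ) ^ (-s)‖ ≤ 2 * y ^ (-s.re) := by
    refine (norm_sub_le _ _).trans ?_
    rw [norm_cpow_real _ (add_pos ht hy), norm_cpow_real _ hy, Complex.neg_re]
    have : (t + y) ^ (-s.re) ≤ y ^ (-s.re) :=
      Real.rpow_le_rpow_of_nonpos hy (by linarith) (by linarith)
    linarith
  rw [Complex.neg_re]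
  calc _ ≤ t ^ (-s.re) * (2 * y ^ (-s.re)) := by gcongr
    _ = _ := by ring

lemma integrableOn_G_Ioi (s : ℂ) (hs : 1 < s.re) {y b : ℝ} (hy : 0 < y) (hb : 0 < b) :
    IntegrableOn (G s y) (Set.Ioi b) := by
  have h : IntegrableOn (fun u : ℝ => 2 * y ^ (-s.re) * u ^ (-s.re)) (Set.Ioi b) :=
    (integrableOn_Ioi_rpow_of_lt (by linarith) hb).const_mul _
  refine Integrable.mono' h ?_ ?_
  · exact ((continuousOn_G s hy).mono (fun t ht => lt_trans hb ht)).aestronglyMeasurable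
      measurableSet_Ioi
  · filter_upwards [ae_restrict_mem measurableSet_Ioi] with u hu
    exact norm_G_le2 s (by linarith) hy (lt_trans hb hu)

lemma integrableOn_G_Ioi0 (s : ℂ) (hs : 1 < s.re) (hs2 : s.re < 2) {y : ℝ} (hy : 0 < y) :
    IntegrableOn (G s y) (Set.Ioi 0) := by
  have h1 := intervalIntegrable_G s (by linarith) hs2 hy (zero_le_one)
  rw [intervalIntegrable_iff_integrableOn_Ioc_of_le zero_le_one] at h1
  have := h1.union (integrableOn_G_Ioi s hs hy one_pos)
  rwa [Ioc_union_Ioi_eq_Ioi zero_le_one] at this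

lemma trapezoid (s : ℂ) {y θ : ℝ} (hy : 0 < y) (hθ : 0 ≤ θ) (n : ℕ) (hn : 1 ≤ n) :
    ∫ u in (n:ℝ)..(n + 1 : ℝ), ((wk u : ℂ) * G2 s y (u + θ) + G s y (u + θ)) =
      (G s y (n + θ) + G s y (n + 1 + θ)) / 2 := by
  have hn' : (1:ℝ) ≤ n := by exact_mod_cast hn
  have h1 : ∫ u in (n:ℝ)..(n + 1 : ℝ), ((wk u : ℂ) * G2 s y (u + θ) + G s y (u + θ)) =
      ∫ u in (n:ℝ)..(n + 1 : ℝ), ((((u - n) * (n + 1 - u) / 2 : ℝ) : ℂ) * G2 s y (u + θ)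
        + G s y (u + θ)) := by
    refine intervalIntegral.integral_congr_ae ?_
    have hne : ∀ᵐ u : ℝ, u ≠ (n + 1 : ℝ) := by
      simp [ae_iff, measure_singleton]
    filter_upwards [hne] with u hu1 hu
    rw [Set.uIoc_of_le (by linarith)] at hu
    have hf : Int.fract u = u - n := by
      rw [Int.fract_eq_iff]
      refine ⟨by linarith [hu.1], ?_, n, by simp⟩
      have := lt_of_le_of_ne hu.2 hu1
      linarith
    have : wk u = (u - n) * (n + 1 - u) / 2 := by
      unfold wk; rw [hf]; ring
    rw [this]
  rw [h1]
  have hd : ∀ u ∈ Set.uIcc (n:ℝ) (n + 1), HasDerivAt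
      (fun u : ℝ => (((u - n) * (n + 1 - u) / 2 : ℝ) : ℂ) * G1 s y (u + θ)
        - (((2 * n + 1 - 2 * u) / 2 : ℝ) : ℂ) * G s y (u + θ))
      ((((u - n) * (n + 1 - u) / 2 : ℝ) : ℂ) * G2 s y (u + θ) + G s y (u + θ)) u := by
    intro u hu
    rw [Set.uIcc_of_le (by linarith)] at hu
    have hu0 : 0 < u + θ := by linarith [hu.1]
    have a1 : HasDerivAt (fun u : ℝ => (((u - n) * (n + 1 - u) / 2 : ℝ) : ℂ))
        (((2 * n + 1 - 2 * u) / 2 : ℝ) : ℂ) u := by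
      refine HasDerivAt.ofReal_comp ?_
      have := (((hasDerivAt_id u).sub_const (n:ℝ)).mul
        ((hasDerivAt_id u).const_sub ((n:ℝ) + 1))).div_const 2
      refine this.congr_deriv ?_
      simp; ring
    have a2 : HasDerivAt (fun u : ℝ => (((2 * n + 1 - 2 * u) / 2 : ℝ) : ℂ))
        ((-1 : ℝ) : ℂ) u := by
      refine HasDerivAt.ofReal_comp ?_
      have := (((hasDerivAt_id u).const_mul (2:ℝ)).const_sub (2 * (n:ℝ) + 1)).div_const 2
      refine this.congr_deriv ?_
      simp
    have b1 := (hasDerivAt_G1 s hy hu0).comp_add_const u θ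
    have b2 := (hasDerivAt_G s hy hu0).comp_add_const u θ
    refine ((a1.mul b1).sub (a2.mul b2)).congr_deriv ?_
    push_cast
    ring
  have hcont : ContinuousOn (fun u : ℝ => (((u - n) * (n + 1 - u) / 2 : ℝ) : ℂ) * G2 s y (u + θ)
      + G s y (u + θ)) (Set.uIcc (n:ℝ) (n + 1)) := by
    have hm : MapsTo (fun u : ℝ => u + θ) (Set.uIcc (n:ℝ) (n + 1)) (Set.Ioi 0) := by
      intro u hu
      rw [Set.uIcc_of_le (by linarith)] at hu
      show (0:ℝ) < u + θ
      linarith [hu.1]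
    have c1 := (continuousOn_G2 s hy).comp (f := fun u : ℝ => u + θ) (by fun_prop) hm
    have c2 := (continuousOn_G s hy).comp (f := fun u : ℝ => u + θ) (by fun_prop) hm
    refine ContinuousOn.add (ContinuousOn.mul ?_ c1) c2
    exact Complex.continuous_ofReal.comp_continuousOn (by fun_prop)
  rw [intervalIntegral.integral_eq_sub_of_hasDerivAt hd hcont.intervalIntegrable]
  push_cast
  ring

lemma trapezoid_sum (s : ℂ) (hs : 0 < s.re) {y θ : ℝ} (hy : 0 < y) (hθ : 0 ≤ θ) (N : ℕ) :
    ∫ u in (1:ℝ)..((N : ℝ) + 1), ((wk u : ℂ) * G2 s y (u + θ) + G s y (u + θ)) =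
      (∑ n ∈ Finset.range N, G s y (n + 1 + θ)) - G s y (1 + θ) / 2 + G s y (N + 1 + θ) / 2 := by
  have hint : ∀ a b : ℝ, 1 ≤ a → 1 ≤ b → IntervalIntegrable
      (fun u : ℝ => ((wk u : ℂ) * G2 s y (u + θ) + G s y (u + θ))) volume a b := by
    intro a b ha hb
    refine IntervalIntegrable.add ?_ ?_
    · rw [intervalIntegrable_iff]
      refine (integrableOn_wG2 s hs hy hθ).mono_set ?_
      intro u hu
      rw [Set.uIoc, Set.mem_Ioc] at hu
      exact lt_of_le_of_lt (le_min ha hb) hu.1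
    · refine ContinuousOn.intervalIntegrable ?_
      refine (continuousOn_G s hy).comp (f := fun u : ℝ => u + θ) (by fun_prop) ?_
      intro u hu
      have : 1 ≤ u := (le_min ha hb).trans hu.1
      show (0:ℝ) < u + θ
      linarith
  induction N with
  | zero => simp
  | succ N ih =>
    have h1 : (1:ℝ) ≤ (N:ℝ) + 1 := by linarith [(Nat.cast_nonneg N : (0:ℝ) ≤ N)]
    push_cast
    rw [← intervalIntegral.integral_add_adjacent_intervals (hint 1 (N + 1) le_rfl h1)
      (hint (N + 1) (N + 1 + 1) h1 (by linarith)), ih, Finset.sum_range_succ]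
    have := trapezoid s hy hθ (N + 1) (by omega)
    push_cast at this
    rw [this]
    ring

lemma summable_G (s : ℂ) (hs : 1 < s.re) {y θ : ℝ} (hy : 0 < y) (hθ : 0 ≤ θ) :
    Summable (fun n : ℕ => G s y (n + 1 + θ)) := by
  have h := (summable_aux (α := s.re - 1) (by linarith)).mul_left (2 * y ^ (-s.re))
  refine Summable.of_norm_bounded h ?_
  intro n
  have hn : (0:ℝ) < (n:ℝ) + 1 := by positivity
  refine (norm_G_le2 s (by linarith) hy (by positivity)).trans ?_
  have e : -(s.re - 1) - 1 = -s.re := by ring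
  rw [e]
  have : ((n:ℝ) + 1 + θ) ^ (-s.re) ≤ ((n:ℝ) + 1) ^ (-s.re) :=
    Real.rpow_le_rpow_of_nonpos hn (by linarith) (by linarith)
  gcongr

lemma euler_maclaurin (s : ℂ) (hs : 1 < s.re) (hs2 : s.re < 2) {y θ : ℝ} (hy : 0 < y)
    (hθ : 0 < θ) :
    HasSum (fun j : ℕ => G s y (j + θ)) ((∫ t in Set.Ioi (0:ℝ), G s y t) + v s θ y) := by
  have hsum := summable_G s hs hy hθ.le
  have hI1 := integrableOn_wG2 s (by linarith) hy hθ.le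
  have hI2 : IntegrableOn (fun u : ℝ => G s y (u + θ)) (Set.Ioi 1) := by
    have h : IntegrableOn (fun u : ℝ => 2 * y ^ (-s.re) * u ^ (-s.re)) (Set.Ioi 1) :=
      (integrableOn_Ioi_rpow_of_lt (by linarith) one_pos).const_mul _
    refine Integrable.mono' h ?_ ?_
    · refine ContinuousOn.aestronglyMeasurable ?_ measurableSet_Ioi
      refine (continuousOn_G s hy).comp (f := fun u : ℝ => u + θ) (by fun_prop) ?_
      intro u hu
      have : (1:ℝ) < u := hu
      show (0:ℝ) < u + θ
      linarith
    · filter_upwards [ae_restrict_mem measurableSet_Ioi] with u hu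
      have hu1 : (1:ℝ) < u := hu
      refine (norm_G_le2 s (by linarith) hy (by linarith)).trans ?_
      have : (u + θ) ^ (-s.re) ≤ u ^ (-s.re) :=
        Real.rpow_le_rpow_of_nonpos (by linarith) (by linarith) (by linarith)
      gcongr
  have hN : Tendsto (fun N : ℕ => (N:ℝ) + 1) atTop atTop :=
    tendsto_atTop_add_const_right _ _ tendsto_natCast_atTop_atTop
  have hlim := intervalIntegral_tendsto_integral_Ioi 1 (hI1.add hI2) hN
  have hlim2 : Tendsto (fun N : ℕ => (∑ n ∈ Finset.range N, G s y (n + 1 + θ)) - G s y (1 + θ) / 2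
      + G s y (N + 1 + θ) / 2) atTop
      (𝓝 ((∑' n : ℕ, G s y (n + 1 + θ)) - G s y (1 + θ) / 2 + 0 / 2)) := by
    refine Tendsto.add (hsum.hasSum.tendsto_sum_nat.sub tendsto_const_nhds) ?_
    exact hsum.tendsto_atTop_zero.div_const 2
  have heq := tendsto_nhds_unique (hlim.congr fun N => trapezoid_sum s (by linarith) hy hθ.le N) hlim2
  simp only [Pi.add_apply] at heq
  rw [integral_add hI1 hI2] at heq
  have hshift : ∫ u in Set.Ioi (1:ℝ), G s y (u + θ) = ∫ t in Set.Ioi (1 + θ), G s y t := by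
    have h := (measurePreserving_add_right volume θ).setIntegral_preimage_emb
      (measurableEmbedding_addRight θ) (G s y) (Set.Ioi (1 + θ))
    rw [← h]
    simp
  have hsplit : ∫ t in Set.Ioi (0:ℝ), G s y t =
      (∫ t in (0:ℝ)..(1 + θ), G s y t) + ∫ t in Set.Ioi (1 + θ), G s y t := by
    rw [intervalIntegral.integral_interval_add_Ioi (integrableOn_G_Ioi0 s hs hs2 hy)]
    exact integrableOn_G_Ioi s hs hy (by linarith)
  rw [hshift] at heq
  have hs' : Summable (fun j : ℕ => G s y (j + θ)) := by
    refine (summable_nat_add_iff 1).mp ?_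
    simpa using hsum
  have ht : ∑' j : ℕ, G s y (j + θ) = (∫ t in Set.Ioi (0:ℝ), G s y t) + v s θ y := by
    rw [hs'.tsum_eq_zero_add]
    push_cast
    unfold v
    rw [hsplit]
    have : ∑' n : ℕ, G s y (n + 1 + θ) = (∫ u in Set.Ioi (1:ℝ), (wk u : ℂ) * G2 s y (u + θ)) +
      (∫ t in Set.Ioi (1 + θ), G s y t) + G s y (1 + θ) / 2 := by
      rw [heq]; ring
    rw [this]
    simp only [zero_add]
    ring
  rw [← ht]
  exact hs'.hasSum

end RecipAux

namespace RecipAux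
open MeasureTheory Set Filter Topology

lemma image_subst : (fun w : ℝ => w / (1 - w)) '' Set.Ioo 0 1 = Set.Ioi 0 := by
  ext u
  constructor
  · rintro ⟨w, ⟨h0, h1⟩, rfl⟩
    exact div_pos h0 (by linarith)
  · intro hu
    have hu' : 0 < u := hu
    refine ⟨u / (1 + u), ⟨by positivity, (div_lt_one (by positivity)).mpr (by linarith)⟩, ?_⟩
    have : (1 + u) ≠ 0 := by positivity
    have e : 1 - u / (1 + u) = 1 / (1 + u) := by field_simp; ring
    show u / (1 + u) / (1 - u / (1 + u)) = u
    rw [e]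
    field_simp

lemma deriv_subst : ∀ w ∈ Set.Ioo (0:ℝ) 1, HasDerivWithinAt (fun w : ℝ => w / (1 - w))
    (1 / (1 - w) ^ 2) (Set.Ioo 0 1) w := by
  rintro w ⟨h0, h1⟩
  have h : (1 - w) ≠ 0 := by linarith
  have := (hasDerivAt_id w).div ((hasDerivAt_id w).const_sub 1) h
  refine (this.congr_deriv ?_).hasDerivWithinAt
  simp

lemma inj_subst : InjOn (fun w : ℝ => w / (1 - w)) (Set.Ioo 0 1) := by
  rintro x ⟨h0, h1⟩ y ⟨h2, h3⟩ h
  have a : (1 - x) ≠ 0 := by linarith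
  have b : (1 - y) ≠ 0 := by linarith
  have h' : x / (1 - x) = y / (1 - y) := h
  rw [div_eq_div_iff a b] at h'
  linarith

noncomputable def H (s : ℂ) (u : ℝ) : ℂ :=
  (u : ℂ) ^ (1 - s) * ((u + 1 : ℝ) : ℂ) ^ (-s - 1)

lemma H_subst (s : ℂ) {w : ℝ} (hw : w ∈ Set.Ioo (0:ℝ) 1) :
    |1 / (1 - w) ^ 2| • H s (w / (1 - w)) =
      (w : ℂ) ^ ((2 - s) - 1) * (1 - (w : ℂ)) ^ ((2 * s - 1) - 1) := by
  obtain ⟨h0, h1⟩ := hw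
  have hp : 0 < 1 - w := by linarith
  have e : w / (1 - w) + 1 = (1 - w)⁻¹ := by field_simp; ring
  unfold H
  rw [e, div_eq_mul_inv w, Complex.ofReal_mul, Complex.mul_cpow_ofReal_nonneg h0.le (by positivity)]
  have e2 : ∀ r : ℂ, (((1 - w)⁻¹ : ℝ) : ℂ) ^ r = ((1 - w : ℝ) : ℂ) ^ (-r) := by
    intro r
    rw [Complex.ofReal_inv, Complex.inv_cpow, Complex.cpow_neg]
    rw [Complex.arg_ofReal_of_nonneg hp.le]
    exact Real.pi_pos.ne
  rw [e2, e2, abs_of_pos (by positivity), Complex.real_smul]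
  have hne : ((1 - w : ℝ) : ℂ) ≠ 0 := by exact_mod_cast hp.ne'
  have e3 : ((1 / (1 - w) ^ 2 : ℝ) : ℂ) = ((1 - w : ℝ) : ℂ) ^ (-2 : ℂ) := by
    rw [Complex.cpow_neg]
    push_cast
    simp
  rw [e3]
  have e4 : (1 - (w : ℂ)) = ((1 - w : ℝ) : ℂ) := by push_cast; rfl
  rw [e4, show (2 - s) - 1 = 1 - s by ring,
    show (2 * s - 1) - 1 = -2 + -(1 - s) + -(-s - 1) by ring, Complex.cpow_add _ _ hne,
    Complex.cpow_add _ _ hne]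
  ring

lemma integrableOn_H (s : ℂ) (hs : 1 < s.re) (hs2 : s.re < 2) : IntegrableOn (H s) (Set.Ioi 0) := by
  rw [← image_subst, integrableOn_image_iff_integrableOn_abs_deriv_smul measurableSet_Ioo
    deriv_subst inj_subst]
  have h := Complex.betaIntegral_convergent (u := 2 - s) (v := 2 * s - 1) (by simp; linarith)
    (by simp; linarith)
  rw [intervalIntegrable_iff_integrableOn_Ioo_of_le zero_le_one] at h
  exact h.congr_fun (fun w hw => (H_subst s hw).symm) measurableSet_Ioo

lemma integral_H (s : ℂ) : ∫ u in Set.Ioi 0, H s u = Complex.betaIntegral (2 - s) (2 * s - 1) := by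
  rw [← image_subst, integral_image_eq_integral_abs_deriv_smul measurableSet_Ioo
    deriv_subst inj_subst]
  rw [setIntegral_congr_fun measurableSet_Ioo (fun w hw => H_subst s hw)]
  unfold Complex.betaIntegral
  rw [intervalIntegral.integral_of_le zero_le_one, integral_Ioc_eq_integral_Ioo]

lemma integral_G_one (s : ℂ) (hs : 1 < s.re) (hs2 : s.re < 2) :
    ∫ u in Set.Ioi 0, G s 1 u = Complex.Gamma (1 - s) * Complex.Gamma (2 * s - 1) / Complex.Gamma s := by
  have hs1 : (1 - s) ≠ 0 := by
    intro h
    have := congrArg Complex.re h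
    simp at this
    linarith
  have hs0 : s ≠ 0 := by
    rintro rfl
    simp at hs
    linarith
  have hG := integrableOn_G_Ioi0 s hs hs2 one_pos
  have hH := integrableOn_H s hs hs2
  have key := integral_Ioi_of_hasDerivAt_of_tendsto (a := 0) (m := 0)
    (f := fun u : ℝ => (u : ℂ) * G s 1 u / (1 - s))
    (f' := fun u => G s 1 u + (-s / (1 - s)) * H s u) ?_ ?_ (hG.add (hH.const_mul _)) ?_
  · rw [integral_add hG (hH.const_mul _), integral_const_mul, integral_H,
      Complex.betaIntegral_eq_Gamma_mul_div _ _ (by simp; linarith) (by simp; linarith)] at key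
    simp only [Complex.ofReal_zero, zero_mul, zero_div, sub_zero] at key
    rw [show (2 - s) = (1 - s) + 1 by ring, Complex.Gamma_add_one _ hs1,
      show (1 - s) + 1 + (2 * s - 1) = s + 1 by ring, Complex.Gamma_add_one _ hs0] at key
    have hg : Complex.Gamma s ≠ 0 := Complex.Gamma_ne_zero_of_re_pos (by linarith)
    rw [eq_neg_of_add_eq_zero_left key]
    field_simp
  · -- continuity at zero
    have hz : (fun u : ℝ => (u : ℂ) * G s 1 u / (1 - s)) 0 = 0 := by simp
    unfold ContinuousWithinAt
    rw [hz]
    refine squeeze_zero_norm' (a := fun u : ℝ => ‖s‖ * u ^ (2 - s.re) / ‖1 - s‖) ?_ ?_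
    · filter_upwards [self_mem_nhdsWithin] with u hu
      rcases eq_or_lt_of_le (show (0:ℝ) ≤ u from hu) with h | h
      · rw [← h]; simp; positivity
      · rw [norm_div, norm_mul]
        have := norm_G_le s (by linarith) one_pos h
        rw [Real.one_rpow, mul_one] at this
        have e : u ^ (2 - s.re) = u * u ^ (1 - s.re) := by
          rw [show 2 - s.re = 1 + (1 - s.re) by ring, Real.rpow_add h, Real.rpow_one]
        rw [e, Complex.norm_real, Real.norm_of_nonneg h.le]
        refine div_le_div_of_nonneg_right ?_ (norm_nonneg _)
        calc u * ‖G s 1 u‖ ≤ u * (‖s‖ * u ^ (1 - s.re)) := by gcongr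
          _ = _ := by ring
    · have : ContinuousAt (fun u : ℝ => ‖s‖ * u ^ (2 - s.re) / ‖1 - s‖) 0 := by
        refine (ContinuousAt.mul continuousAt_const ?_).div_const _
        exact Real.continuousAt_rpow_const _ _ (Or.inr (by linarith))
      have h := this.tendsto
      rw [Real.zero_rpow (by linarith)] at h
      simp only [mul_zero, zero_div] at h
      exact h.mono_left nhdsWithin_le_nhds
  · intro u hu
    have hu' : 0 < u := hu
    have h := (((Complex.ofRealCLM.hasDerivAt (x := u)).mul (hasDerivAt_G s one_pos hu')).div_const (1 - s))
    refine h.congr_deriv ?_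
    have hune : (u : ℂ) ≠ 0 := by exact_mod_cast hu'.ne'
    unfold G1 G H
    simp only [Complex.ofRealCLM_apply, Complex.ofReal_one, one_mul]
    rw [show (1 - s) = 1 + (-s) by ring, Complex.cpow_add _ _ hune, Complex.cpow_sub _ _ hune,
      Complex.cpow_one]
    rw [show (1 - s) = 1 + (-s) by ring] at hs1
    field_simp
    ring
  · refine squeeze_zero_norm' (a := fun u : ℝ => 2 * u ^ (-(s.re - 1)) / ‖1 - s‖) ?_ ?_
    · filter_upwards [eventually_gt_atTop 0] with u h
      rw [norm_div, norm_mul]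
      have := norm_G_le2 s (by linarith) one_pos h
      rw [Real.one_rpow, mul_one] at this
      have e : u ^ (-(s.re - 1)) = u * u ^ (-s.re) := by
        rw [show -(s.re - 1) = 1 + (-s.re) by ring, Real.rpow_add h, Real.rpow_one]
      rw [e, Complex.norm_real, Real.norm_of_nonneg h.le]
      refine div_le_div_of_nonneg_right ?_ (norm_nonneg _)
      calc u * ‖G s 1 u‖ ≤ u * (2 * u ^ (-s.re)) := by gcongr
        _ = _ := by ring
    · have h := ((tendsto_rpow_neg_atTop (y := s.re - 1) (by linarith)).const_mul 2).div_const ‖1 - s‖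
      simpa using h

lemma integral_G (s : ℂ) (hs : 1 < s.re) (hs2 : s.re < 2) {y : ℝ} (hy : 0 < y) :
    ∫ u in Set.Ioi 0, G s y u = (y : ℂ) ^ (1 - 2 * s) *
      (Complex.Gamma (1 - s) * Complex.Gamma (2 * s - 1) / Complex.Gamma s) := by
  rw [← integral_G_one s hs hs2]
  have h := integral_comp_mul_left_Ioi' (G s y) 0 hy
  rw [mul_zero] at h
  rw [← h]
  have hyne : (y : ℂ) ≠ 0 := by exact_mod_cast hy.ne'
  have e : ∀ u ∈ Set.Ioi (0:ℝ), G s y (y * u) = (y : ℂ) ^ (- 2 * s) * G s 1 u := by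
    intro u hu
    have hu' : 0 < u := hu
    unfold G
    rw [show y * u + y = y * (u + 1) by ring, Complex.ofReal_mul, Complex.ofReal_mul,
      Complex.mul_cpow_ofReal_nonneg hy.le hu'.le,
      Complex.mul_cpow_ofReal_nonneg hy.le (by positivity)]
    rw [show -2 * s = -s + -s by ring, Complex.cpow_add _ _ hyne]
    simp only [Complex.ofReal_one, Complex.one_cpow]
    ring
  rw [setIntegral_congr_fun measurableSet_Ioi e, integral_const_mul, Complex.real_smul,
    show 1 - 2 * s = 1 + (-2 * s) by ring, Complex.cpow_add _ _ hyne, Complex.cpow_one]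
  ring

end RecipAux

namespace RecipAux
open MeasureTheory Set Filter Topology

lemma th_ge_int (m : ℤ) {q : ℕ} (hq : 0 < q) : (1:ℝ) / q ≤ th ((m : ℝ) / q) := by
  have hq' : (0:ℝ) < q := by exact_mod_cast hq
  rw [div_le_iff₀ hq']
  have e : th ((m : ℝ) / q) * q = ((q - m + q * ⌊(m : ℝ) / q⌋ : ℤ) : ℝ) := by
    unfold th Int.fract
    push_cast
    field_simp
    ring
  have hpos := mul_pos (th_pos ((m : ℝ) / q)) hq'
  rw [e] at hpos ⊢
  have : 0 < (q - m + q * ⌊(m : ℝ) / q⌋ : ℤ) := by exact_mod_cast hpos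
  exact_mod_cast this

lemma coe_th (y : ℝ) : ((th y : ℝ) : UnitAddCircle) = ((-y : ℝ) : UnitAddCircle) := by
  have : th y = -y + ((1 + ⌊y⌋ : ℤ) : ℝ) := by
    unfold th Int.fract
    push_cast
    ring
  rw [this]
  simp

/-- The additive form of the twisted second moment. -/
noncomputable def Sh (s : ℂ) (a : ℤ) (q : ℕ) [NeZero q] : ℂ :=
  ZMod.LFunction (fun r : ZMod q =>
    HurwitzZeta.hurwitzZeta (ZMod.toAddCircle ((a : ZMod q) * r)) s) s

lemma hasSum_hz {s : ℂ} (hs : 1 < s.re) {θ : ℝ} (h0 : 0 < θ) (h1 : θ ≤ 1) :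
    HasSum (fun j : ℕ => (((j : ℝ) + θ : ℝ) : ℂ) ^ (-s))
      (HurwitzZeta.hurwitzZeta (θ : UnitAddCircle) s) := by
  have h := HurwitzZeta.hasSum_hurwitzZeta_of_one_lt_re (a := θ) ⟨h0.le, h1⟩ hs
  refine h.congr_fun ?_
  intro j
  rw [Complex.cpow_neg, one_div]
  push_cast
  rfl

lemma hasSum_zeta {s : ℂ} (hs : 1 < s.re) :
    HasSum (fun j : ℕ => (((j : ℝ) + 1 : ℝ) : ℂ) ^ (-s)) (riemannZeta s) := by
  have h := hasSum_hz hs one_pos le_rfl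
  have e : ((1 : ℝ) : UnitAddCircle) = 0 := by
    have := AddCircle.coe_period (1:ℝ)
    exact this
  rw [e, HurwitzZeta.hurwitzZeta_zero] at h
  exact h

lemma hasSum_Sh {s : ℂ} (hs : 1 < s.re) (a : ℤ) (q : ℕ) [NeZero q] :
    HasSum (fun n : ℕ => (((n : ℝ) + 1 : ℝ) : ℂ) ^ (-s) *
      HurwitzZeta.hurwitzZeta (((a : ℝ) / q * ((n : ℝ) + 1) : ℝ) : UnitAddCircle) s) (Sh s a q) := by
  have h := (ZMod.LSeriesSummable_of_one_lt_re (fun r : ZMod q =>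
    HurwitzZeta.hurwitzZeta (ZMod.toAddCircle ((a : ZMod q) * r)) s) hs).LSeriesHasSum
  rw [← ZMod.LFunction_eq_LSeries (fun r : ZMod q =>
    HurwitzZeta.hurwitzZeta (ZMod.toAddCircle ((a : ZMod q) * r)) s) hs] at h
  have h2 := (hasSum_nat_add_iff' 1).mpr h
  simp only [Finset.range_one, Finset.sum_singleton, LSeries.term_zero, sub_zero] at h2
  refine h2.congr_fun ?_
  intro n
  rw [LSeries.term_of_ne_zero (by omega)]
  have e : ((a : ZMod q) * ((n + 1 : ℕ) : ZMod q)) = ((a * (n + 1) : ℤ) : ZMod q) := by push_cast; rfl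
  rw [e, ZMod.toAddCircle_intCast, Complex.cpow_neg, div_eq_mul_inv, mul_comm]
  have e2 : ((a * (n + 1) : ℤ) : ℝ) / q = (a : ℝ) / q * ((n : ℝ) + 1) := by push_cast; ring
  rw [e2]
  push_cast
  rfl

/-- The double array behind the reciprocity. -/
noncomputable def fa (s : ℂ) (x : ℝ) (p : ℕ × ℤ) : ℂ :=
  if (p.2 : ℝ) < x * ((p.1 : ℝ) + 1) then
    ((((p.1 : ℝ) + 1 : ℝ)) : ℂ) ^ (-s) * ((x * ((p.1 : ℝ) + 1) - p.2 : ℝ) : ℂ) ^ (-s) else 0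

lemma row_eq (s : ℂ) (x : ℝ) (k j : ℕ) :
    fa s x (k, -⌊-(x * ((k : ℝ) + 1))⌋ - 1 - j) =
      ((((k : ℝ) + 1 : ℝ)) : ℂ) ^ (-s) *
        (((j : ℝ) + th (-(x * ((k : ℝ) + 1))) : ℝ) : ℂ) ^ (-s) := by
  set z := x * ((k : ℝ) + 1) with hz
  have e : z - ((-⌊-z⌋ - 1 - j : ℤ) : ℝ) = j + th (-z) := by
    unfold th Int.fract
    push_cast
    ring
  have hpos : 0 < (j : ℝ) + th (-z) := by
    have := th_pos (-z)
    positivity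
  unfold fa
  simp only [← hz]
  rw [if_pos (by linarith), e]

lemma row_zero (s : ℂ) (x : ℝ) (k : ℕ) (l : ℤ)
    (h : ∀ j : ℕ, -⌊-(x * ((k : ℝ) + 1))⌋ - 1 - j ≠ l) : fa s x (k, l) = 0 := by
  unfold fa
  rw [if_neg]
  intro hl
  have h1 : ⌊-(x * ((k : ℝ) + 1))⌋ < -l := by
    rw [Int.floor_lt]
    push_cast
    simp only at hl
    linarith
  refine h (-⌊-(x * ((k : ℝ) + 1))⌋ - 1 - l).toNat ?_
  rw [Int.toNat_of_nonneg (by omega)]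
  ring

lemma hasSum_row {s : ℂ} (hs : 1 < s.re) (x : ℝ) (k : ℕ) :
    HasSum (fun l : ℤ => fa s x (k, l)) ((((k : ℝ) + 1 : ℝ) : ℂ) ^ (-s) *
      HurwitzZeta.hurwitzZeta ((x * ((k : ℝ) + 1) : ℝ) : UnitAddCircle) s) := by
  have hinj : Function.Injective (fun j : ℕ => (-⌊-(x * ((k : ℝ) + 1))⌋ - 1 - j : ℤ)) := by
    intro i j h
    simp only at h
    omega
  rw [← hinj.hasSum_iff]
  · have h := (hasSum_hz hs (th_pos (-(x * ((k : ℝ) + 1)))) (th_le _)).mul_left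
      ((((k : ℝ) + 1 : ℝ) : ℂ) ^ (-s))
    rw [coe_th, neg_neg] at h
    refine h.congr_fun ?_
    intro j
    simp only [Function.comp]
    rw [row_eq]
  · intro l hl
    refine row_zero s x k l ?_
    intro j hj
    exact hl ⟨j, hj⟩

lemma summable_fa {s : ℂ} (hs : 1 < s.re) (a q : ℕ) (hq : 0 < q) :
    Summable (fa s ((a : ℝ) / q)) := by
  set x : ℝ := (a : ℝ) / q with hx
  have hinj : Function.Injective
      (fun p : ℕ × ℕ => ((p.1, -⌊-(x * ((p.1 : ℝ) + 1))⌋ - 1 - p.2) : ℕ × ℤ)) := by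
    rintro ⟨i, j⟩ ⟨i', j'⟩ h
    simp only [Prod.mk.injEq] at h
    obtain ⟨rfl, h⟩ := h
    simp only [Prod.mk.injEq, true_and]
    omega
  rw [← hinj.summable_iff]
  · have hs1 := summable_aux (α := s.re - 1) (by linarith)
    have h := (hs1.mul_of_nonneg hs1 (fun n => by positivity) (fun n => by positivity)).mul_left
      (((1:ℝ) / q) ^ (-s.re))
    refine Summable.of_norm_bounded h ?_
    rintro ⟨k, j⟩
    simp only [Function.comp]
    have hq' : (1:ℝ) ≤ q := by exact_mod_cast hq
    have hth : (1:ℝ) / q ≤ th (-(x * ((k : ℝ) + 1))) := by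
      have := th_ge_int (-(a * (k + 1))) hq
      have e : ((-(a * (k + 1)) : ℤ) : ℝ) / q = -(x * ((k : ℝ) + 1)) := by
        rw [hx]; push_cast; ring
      rwa [e] at this
    have hc : 0 < (1:ℝ) / q := by positivity
    have hc1 : (1:ℝ) / q ≤ 1 := (div_le_one (by positivity)).mpr hq'
    have hjt : 0 < (j:ℝ) + th (-(x * ((k : ℝ) + 1))) := by
      have := th_pos (-(x * ((k : ℝ) + 1)))
      positivity
    rw [row_eq, norm_mul, norm_cpow_real _ (by positivity), norm_cpow_real _ hjt]
    simp only [Complex.neg_re]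
    have e : -(s.re - 1) - 1 = -s.re := by ring
    rw [e]
    have : ((j:ℝ) + th (-(x * ((k : ℝ) + 1)))) ^ (-s.re) ≤ ((1:ℝ) / q) ^ (-s.re) * ((j:ℝ) + 1) ^ (-s.re) := by
      rw [← Real.mul_rpow hc.le (by positivity)]
      refine Real.rpow_le_rpow_of_nonpos (by positivity) ?_ (by linarith)
      have : (1:ℝ) / q * j ≤ 1 * j := by gcongr
      linarith
    calc _ ≤ ((k:ℝ) + 1) ^ (-s.re) * (((1:ℝ) / q) ^ (-s.re) * ((j:ℝ) + 1) ^ (-s.re)) := by gcongr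
      _ = _ := by ring
  · rintro ⟨k, l⟩ hl
    refine row_zero s x k l ?_
    intro j hj
    exact hl ⟨(k, j), by simp only; rw [hj]⟩

lemma hasSum_fa {s : ℂ} (hs : 1 < s.re) (a q : ℕ) [NeZero q] :
    HasSum (fa s ((a : ℝ) / q)) (Sh s a q) := by
  have h := (summable_fa hs a q (NeZero.pos q)).hasSum
  have h2 := h.prod_fiberwise (fun k => hasSum_row hs ((a : ℝ) / q) k)
  have h3 := hasSum_Sh hs (a : ℤ) q
  simp only [Int.cast_natCast] at h3
  rw [h3.unique h2]
  exact h

lemma hasSum_F {s : ℂ} (hs : 1 < s.re) (hs2 : s.re < 2) {y θ : ℝ} (hy : 0 < y) (h0 : 0 < θ)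
    (h1 : θ ≤ 1) :
    HasSum (fun j : ℕ => (((j : ℝ) + θ : ℝ) : ℂ) ^ (-s) * (((j : ℝ) + θ + y : ℝ) : ℂ) ^ (-s))
      ((y : ℂ) ^ (-s) * HurwitzZeta.hurwitzZeta (θ : UnitAddCircle) s
        + ((y : ℂ) ^ (1 - 2 * s) *
      (Complex.Gamma (1 - s) * Complex.Gamma (2 * s - 1) / Complex.Gamma s) + v s θ y)) := by
  have h := ((hasSum_hz hs h0 h1).mul_left ((y : ℂ) ^ (-s))).add (euler_maclaurin s hs hs2 hy h0)
  rw [integral_G s hs hs2 hy] at h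
  refine h.congr_fun ?_
  intro j
  unfold G
  ring

lemma col_pos {s : ℂ} (hs : 1 < s.re) (hs2 : s.re < 2) {x : ℝ} (hx : 0 < x) (n : ℕ) :
    HasSum (fun k : ℕ => fa s x (k, ((n + 1 : ℕ) : ℤ)))
      ((x : ℂ) ^ (-s) * (((((n : ℝ) + 1) / x : ℝ) : ℂ) ^ (-s) *
        HurwitzZeta.hurwitzZeta ((-(((n : ℝ) + 1) / x) : ℝ) : UnitAddCircle) s
        + (((((n : ℝ) + 1) / x : ℝ) : ℂ) ^ (1 - 2 * s) *
      (Complex.Gamma (1 - s) * Complex.Gamma (2 * s - 1) / Complex.Gamma s)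
        + v s (th (((n : ℝ) + 1) / x)) (((n : ℝ) + 1) / x)))) := by
  set y := ((n : ℝ) + 1) / x with hy
  have hy0 : 0 < y := by positivity
  have hxy : x * y = n + 1 := by rw [hy]; field_simp
  have hfl : (⌊y⌋₊ : ℝ) = y - Int.fract y := by
    rw [natCast_floor_eq_intCast_floor hy0.le, Int.self_sub_fract]
  have hinj : Function.Injective (fun j : ℕ => j + ⌊y⌋₊) := by
    intro i j h
    simp only at h
    omega
  rw [← hinj.hasSum_iff]
  · have h := (hasSum_F hs hs2 hy0 (th_pos y) (th_le y)).mul_left ((x : ℂ) ^ (-s))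
    rw [coe_th] at h
    refine h.congr_fun ?_
    intro j
    have hth := th_pos y
    have e1 : (((j + ⌊y⌋₊ : ℕ) : ℝ) + 1) = j + th y + y := by
      push_cast
      rw [hfl]
      unfold th
      ring
    have e2 : x * (j + th y + y) - (((n + 1 : ℕ) : ℤ) : ℝ) = x * (j + th y) := by
      push_cast
      linarith
    simp only [Function.comp, fa]
    rw [e1, e2, if_pos]
    · rw [Complex.ofReal_mul x, Complex.mul_cpow_ofReal_nonneg hx.le (by positivity)]
      ring
    · have : 0 < x * (j + th y) := by positivity
      linarith
  · intro k hk
    unfold fa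
    rw [if_neg]
    intro hl
    simp only at hl
    push_cast at hl
    rw [← hxy] at hl
    have h1 : y < k + 1 := lt_of_mul_lt_mul_left hl hx.le
    have h2 : ⌊y⌋₊ < k + 1 := by
      rw [Nat.floor_lt hy0.le]
      exact_mod_cast h1
    exact hk ⟨k - ⌊y⌋₊, by simp only; omega⟩

lemma col_neg {s : ℂ} (hs : 1 < s.re) (hs2 : s.re < 2) {x : ℝ} (hx : 0 < x) (n : ℕ) :
    HasSum (fun k : ℕ => fa s x (k, -((n + 1 : ℕ) : ℤ)))
      ((x : ℂ) ^ (-s) * (((((n : ℝ) + 1) / x : ℝ) : ℂ) ^ (-s) * riemannZeta s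
        + (((((n : ℝ) + 1) / x : ℝ) : ℂ) ^ (1 - 2 * s) *
      (Complex.Gamma (1 - s) * Complex.Gamma (2 * s - 1) / Complex.Gamma s)
        + v s 1 (((n : ℝ) + 1) / x)))) := by
  set y := ((n : ℝ) + 1) / x with hy
  have hy0 : 0 < y := by positivity
  have hxy : x * y = n + 1 := by rw [hy]; field_simp
  have h := (hasSum_F hs hs2 hy0 one_pos le_rfl).mul_left ((x : ℂ) ^ (-s))
  have e : ((1 : ℝ) : UnitAddCircle) = 0 := AddCircle.coe_period (1:ℝ)
  rw [e, HurwitzZeta.hurwitzZeta_zero] at h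
  refine h.congr_fun ?_
  intro k
  have e2 : x * ((k:ℝ) + 1) - ((-((n + 1 : ℕ) : ℤ) : ℤ) : ℝ) = x * (k + 1 + y) := by
    push_cast
    linarith
  simp only [fa]
  rw [e2, if_pos]
  · rw [Complex.ofReal_mul x, Complex.mul_cpow_ofReal_nonneg hx.le (by positivity)]
    ring
  · have : 0 < x * (k + 1 + y) := by positivity
    linarith

lemma col_zero {s : ℂ} (hs : 1 < s.re) {x : ℝ} (hx : 0 < x) :
    HasSum (fun k : ℕ => fa s x (k, 0)) ((x : ℂ) ^ (-s) * riemannZeta (2 * s)) := by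
  have h := (hasSum_zeta (s := 2 * s) (by simp; linarith)).mul_left ((x : ℂ) ^ (-s))
  refine h.congr_fun ?_
  intro k
  have hk : (((k : ℝ) + 1 : ℝ) : ℂ) ≠ 0 := by
    have : (0:ℝ) < (k : ℝ) + 1 := by positivity
    exact_mod_cast this.ne'
  simp only [fa, Int.cast_zero, sub_zero]
  rw [if_pos (by positivity), Complex.ofReal_mul x,
    Complex.mul_cpow_ofReal_nonneg hx.le (by positivity), show -(2 * s) = -s + -s by ring,
    Complex.cpow_add _ _ hk]
  ring

/-- Reciprocity in the region of absolute convergence. -/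
lemma recip_conv {s : ℂ} (hs : 1 < s.re) (hs2 : s.re < 2) (a q : ℕ) [NeZero a] [NeZero q] :
    Sh s a q - Sh s (-q) a =
      (((a : ℝ) / q : ℝ) : ℂ) ^ (-s) * (riemannZeta (2 * s) +
        2 * (Complex.Gamma (1 - s) * Complex.Gamma (2 * s - 1) / Complex.Gamma s) *
        (((a : ℝ) / q : ℝ) : ℂ) ^ (2 * s - 1) * riemannZeta (2 * s - 1))
      + riemannZeta s ^ 2 + (((a : ℝ) / q : ℝ) : ℂ) ^ (-s) * W s ((a : ℝ) / q) := by
  set x : ℝ := (a : ℝ) / q with hxdef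
  have ha : (0:ℝ) < a := by exact_mod_cast NeZero.pos a
  have hq : (0:ℝ) < q := by exact_mod_cast NeZero.pos q
  have hx : 0 < x := by positivity
  have hxne : (x : ℂ) ≠ 0 := by exact_mod_cast hx.ne'
  set I := Complex.Gamma (1 - s) * Complex.Gamma (2 * s - 1) / Complex.Gamma s with hI
  have hf := (Equiv.prodComm ℤ ℕ).hasSum_iff.mpr (hasSum_fa hs a q)
  have hcol : ∀ l : ℤ, Summable (fun k : ℕ => fa s x (k, l)) := by
    intro l
    exact (summable_fa hs a q (NeZero.pos q)).comp_injective
      (i := fun k : ℕ => ((k, l) : ℕ × ℤ)) (fun i j h => by simpa using h)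
  have h1 := (hf.prod_fiberwise (fun l => (hcol l).hasSum)).nat_add_neg
  have h2 := (hasSum_nat_add_iff' 1).mpr h1
  simp only [Finset.range_one, Finset.sum_singleton, Nat.cast_zero, neg_zero,
    (col_zero hs hx).tsum_eq, (col_pos hs hs2 hx _).tsum_eq, (col_neg hs hs2 hx _).tsum_eq] at h2
  have hA := (hasSum_zeta hs).mul_left (riemannZeta s)
  have hB := hasSum_Sh hs (-(q : ℤ)) a
  have hC := (hasSum_zeta (s := 2 * s - 1) (by simp; linarith)).mul_left
    (2 * (x : ℂ) ^ (-s) * (x : ℂ) ^ (2 * s - 1) * I)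
  have h3 := ((h2.sub hA).sub hB).sub hC
  have h4 : HasSum (fun n : ℕ => (x : ℂ) ^ (-s) * vv s (((n : ℝ) + 1) / x))
      (Sh s a q + (x : ℂ) ^ (-s) * riemannZeta (2 * s) -
            ((x : ℂ) ^ (-s) * riemannZeta (2 * s) + (x : ℂ) ^ (-s) * riemannZeta (2 * s)) -
          riemannZeta s * riemannZeta s - Sh s (-q) a -
      2 * (x : ℂ) ^ (-s) * (x : ℂ) ^ (2 * s - 1) * I * riemannZeta (2 * s - 1)) := by
    refine h3.congr_fun ?_
    intro n
    have hn : (0:ℝ) < (n : ℝ) + 1 := by positivity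
    have e1 : (x : ℂ) ^ (-s) * ((((n : ℝ) + 1) / x : ℝ) : ℂ) ^ (-s) =
        (((n : ℝ) + 1 : ℝ) : ℂ) ^ (-s) := by
      rw [← Complex.mul_cpow_ofReal_nonneg hx.le (by positivity), ← Complex.ofReal_mul]
      congr 2
      field_simp
    have e2 : ((((n : ℝ) + 1) / x : ℝ) : ℂ) ^ (1 - 2 * s) =
        (x : ℂ) ^ (2 * s - 1) * (((n : ℝ) + 1 : ℝ) : ℂ) ^ (-(2 * s - 1)) := by
      have : (((n : ℝ) + 1 : ℝ) : ℂ) = (x : ℂ) * ((((n : ℝ) + 1) / x : ℝ) : ℂ) := by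
        rw [← Complex.ofReal_mul]
        congr 1
        field_simp
      rw [this, Complex.mul_cpow_ofReal_nonneg hx.le (by positivity), ← mul_assoc,
        ← Complex.cpow_add _ _ hxne]
      simp
    have e3 : (((-(q : ℤ) : ℤ) : ℝ) / a * ((n : ℝ) + 1)) = -(((n : ℝ) + 1) / x) := by
      rw [hxdef]
      push_cast
      field_simp
    rw [e3, e2, ← e1]
    unfold vv
    ring
  have h5 := h4.tsum_eq
  rw [tsum_mul_left] at h5
  have h6 : ∑' n : ℕ, vv s (((n : ℝ) + 1) / x) = W s x := rfl
  rw [h6] at h5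
  rw [h5]
  ring

end RecipAux

namespace RecipAux
open MeasureTheory Set Filter Topology

/-- The connected domain used in the analytic continuation. -/
def Udom : Set ℂ := ({s : ℂ | 1 < s.re ∧ s.re < 2} ∪ {s : ℂ | 1/2 < s.re ∧ s.re < 2 ∧ 0 < s.im}) ∪
  {s : ℂ | 1/2 < s.re ∧ s.re < 1}

lemma Udom_pre : IsPreconnected Udom := by
  have c1 : Convex ℝ {s : ℂ | 1 < s.re ∧ s.re < 2} :=
    (convex_halfSpace_re_gt 1).inter (convex_halfSpace_re_lt 2)
  have c2 : Convex ℝ {s : ℂ | 1/2 < s.re ∧ s.re < 2 ∧ 0 < s.im} :=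
    (convex_halfSpace_re_gt (1/2)).inter ((convex_halfSpace_re_lt 2).inter (convex_halfSpace_im_gt 0))
  have c3 : Convex ℝ {s : ℂ | 1/2 < s.re ∧ s.re < 1} :=
    (convex_halfSpace_re_gt (1/2)).inter (convex_halfSpace_re_lt 1)
  have h12 := c1.isPreconnected.union (⟨3/2, 1⟩ : ℂ) (by norm_num) (by norm_num)
    c2.isPreconnected
  exact h12.union (⟨3/4, 1⟩ : ℂ) (by right; norm_num) (by norm_num) c3.isPreconnected

lemma Udom_open : IsOpen Udom := by
  unfold Udom
  have hre : Continuous Complex.re := Complex.continuous_re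
  have him : Continuous Complex.im := Complex.continuous_im
  refine IsOpen.union (IsOpen.union ?_ ?_) ?_
  · exact (isOpen_lt continuous_const hre).inter (isOpen_lt hre continuous_const)
  · exact (isOpen_lt continuous_const hre).inter ((isOpen_lt hre continuous_const).inter
      (isOpen_lt continuous_const him))
  · exact (isOpen_lt continuous_const hre).inter (isOpen_lt hre continuous_const)

lemma Udom_prop {s : ℂ} (h : s ∈ Udom) : 1/2 < s.re ∧ s.re < 2 ∧ s ≠ 1 := by
  rcases h with (h | h) | h
  · refine ⟨by linarith [h.1], h.2, ?_⟩
    rintro rfl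
    simp at h
  · refine ⟨h.1, h.2.1, ?_⟩
    rintro rfl
    simp at h
  · refine ⟨h.1, by linarith [h.2], ?_⟩
    rintro rfl
    simp at h

lemma differentiableAt_Sh {s : ℂ} (hs : s ≠ 1) (a : ℤ) (q : ℕ) [NeZero q] :
    DifferentiableAt ℂ (fun s => Sh s a q) s := by
  unfold Sh ZMod.LFunction
  refine DifferentiableAt.mul ?_ ?_
  · refine DifferentiableAt.const_cpow (by fun_prop) (Or.inl ?_)
    exact_mod_cast NeZero.ne q
  · refine DifferentiableAt.fun_sum ?_
    intro j _
    exact (HurwitzZeta.differentiableAt_hurwitzZeta _ hs).mul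
      (HurwitzZeta.differentiableAt_hurwitzZeta _ hs)

lemma differentiableAt_W' {s : ℂ} (h0 : 0 < s.re) (h2 : s.re < 2) (a q : ℕ) [NeZero a] [NeZero q] :
    DifferentiableAt ℂ (fun s => W s ((a : ℝ) / q)) s := by
  have ha : (0:ℝ) < a := by exact_mod_cast NeZero.pos a
  have ha1 : (1:ℝ) ≤ a := by exact_mod_cast NeZero.pos a
  have hq : (0:ℝ) < q := by exact_mod_cast NeZero.pos q
  refine differentiableAt_W h0 h2 (c := 1 / a) (by positivity) (by positivity) ?_ ?_
  · exact (div_le_one ha).mpr ha1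
  · intro l
    exact th_ge (NeZero.pos a) l

lemma recip_ext {s : ℂ} (hs : s ∈ Udom) (a q : ℕ) [NeZero a] [NeZero q] :
    Sh s a q - Sh s (-q) a =
      (((a : ℝ) / q : ℝ) : ℂ) ^ (-s) * (riemannZeta (2 * s) +
        2 * (Complex.Gamma (1 - s) * Complex.Gamma (2 * s - 1) / Complex.Gamma s) *
        (((a : ℝ) / q : ℝ) : ℂ) ^ (2 * s - 1) * riemannZeta (2 * s - 1))
      + riemannZeta s ^ 2 + (((a : ℝ) / q : ℝ) : ℂ) ^ (-s) * W s ((a : ℝ) / q) := by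
  have ha : (0:ℝ) < a := by exact_mod_cast NeZero.pos a
  have hq : (0:ℝ) < q := by exact_mod_cast NeZero.pos q
  have hx : 0 < (a : ℝ) / q := by positivity
  have hxne : (((a : ℝ) / q : ℝ) : ℂ) ≠ 0 := by exact_mod_cast hx.ne'
  refine AnalyticOnNhd.eqOn_of_preconnected_of_eventuallyEq (𝕜 := ℂ)
    (f := fun s => Sh s a q - Sh s (-q) a)
    (g := fun s => (((a : ℝ) / q : ℝ) : ℂ) ^ (-s) * (riemannZeta (2 * s) +
        2 * (Complex.Gamma (1 - s) * Complex.Gamma (2 * s - 1) / Complex.Gamma s) *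
        (((a : ℝ) / q : ℝ) : ℂ) ^ (2 * s - 1) * riemannZeta (2 * s - 1))
      + riemannZeta s ^ 2 + (((a : ℝ) / q : ℝ) : ℂ) ^ (-s) * W s ((a : ℝ) / q))
    ?_ ?_ Udom_pre (z₀ := 3/2) ?_ ?_ hs
  · refine DifferentiableOn.analyticOnNhd ?_ Udom_open
    intro z hz
    obtain ⟨h1, h2, h3⟩ := Udom_prop hz
    exact ((differentiableAt_Sh h3 _ _).sub (differentiableAt_Sh h3 _ _)).differentiableWithinAt
  · refine DifferentiableOn.analyticOnNhd ?_ Udom_open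
    intro z hz
    obtain ⟨h1, h2, h3⟩ := Udom_prop hz
    refine DifferentiableAt.differentiableWithinAt ?_
    have hp : DifferentiableAt ℂ (fun s : ℂ => (((a : ℝ) / q : ℝ) : ℂ) ^ (-s)) z :=
      DifferentiableAt.const_cpow (by fun_prop) (Or.inl hxne)
    have hp2 : DifferentiableAt ℂ (fun s : ℂ => (((a : ℝ) / q : ℝ) : ℂ) ^ (2 * s - 1)) z :=
      DifferentiableAt.const_cpow (by fun_prop) (Or.inl hxne)
    have hz1 : DifferentiableAt ℂ (fun s : ℂ => riemannZeta (2 * s)) z := by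
      refine DifferentiableAt.comp z (differentiableAt_riemannZeta ?_) (by fun_prop)
      intro h
      have := congrArg Complex.re h
      simp at this
      linarith
    have hz2 : DifferentiableAt ℂ (fun s : ℂ => riemannZeta (2 * s - 1)) z := by
      refine DifferentiableAt.comp z (differentiableAt_riemannZeta ?_) (by fun_prop)
      intro h
      exact h3 (by linear_combination h / 2)
    have hg1 : DifferentiableAt ℂ (fun s : ℂ => Complex.Gamma (1 - s)) z := by
      refine DifferentiableAt.comp z (Complex.differentiableAt_Gamma _ ?_) (by fun_prop)
      intro m h
      rcases Nat.eq_zero_or_pos m with hm | hm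
      · subst hm
        simp at h
        exact h3 (by linear_combination -h)
      · have := congrArg Complex.re h
        have hm' : (1:ℝ) ≤ m := by exact_mod_cast hm
        simp at this
        linarith
    have hg2 : DifferentiableAt ℂ (fun s : ℂ => Complex.Gamma (2 * s - 1)) z := by
      refine DifferentiableAt.comp z (Complex.differentiableAt_Gamma _ ?_) (by fun_prop)
      intro m h
      have := congrArg Complex.re h
      have hm' : (0:ℝ) ≤ m := by positivity
      simp at this
      linarith
    have hg3 : DifferentiableAt ℂ (fun s : ℂ => Complex.Gamma s) z := by
      refine Complex.differentiableAt_Gamma _ ?_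
      intro m h
      have := congrArg Complex.re h
      have hm' : (0:ℝ) ≤ m := by positivity
      simp at this
      linarith
    have hg0 : Complex.Gamma z ≠ 0 := Complex.Gamma_ne_zero_of_re_pos (by linarith)
    have hW := differentiableAt_W' (s := z) (by linarith) h2 a q
    exact ((hp.mul (hz1.add (((((hg1.mul hg2).div hg3 hg0).const_mul 2).mul hp2).mul hz2))).add
      ((differentiableAt_riemannZeta h3).pow 2)).add (hp.mul hW)
  · left; left; norm_num
  · have ho : IsOpen {s : ℂ | 1 < s.re ∧ s.re < 2} :=
      (isOpen_lt continuous_const Complex.continuous_re).inter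
        (isOpen_lt Complex.continuous_re continuous_const)
    filter_upwards [ho.mem_nhds (show (3/2 : ℂ) ∈ {s : ℂ | 1 < s.re ∧ s.re < 2} by norm_num)]
      with z hz
    exact recip_conv hz.1 hz.2 a q

lemma main_limit {x : ℝ} (hx : 0 < x) :
    Tendsto (fun e : ℂ => riemannZeta (1 + e) +
      2 * (Complex.Gamma (1/2 - e/2) * Complex.Gamma e / Complex.Gamma (1/2 + e/2)) *
        (x : ℂ) ^ e * riemannZeta e) (𝓝[≠] 0)
      (𝓝 ((-Real.log x + Real.eulerMascheroniConstant - Real.log (8 * Real.pi) : ℝ) : ℂ)) := by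
  have hxne : (x : ℂ) ≠ 0 := by exact_mod_cast hx.ne'
  set D : ℂ := -(√Real.pi : ℂ) * (Real.eulerMascheroniConstant + 2 * Complex.log 2) with hD
  have hG := Complex.hasDerivAt_Gamma_one_half
  have hA : HasDerivAt (fun e : ℂ => Complex.Gamma (1/2 - e/2)) (D * (-(1/2))) 0 := by
    refine HasDerivAt.comp (h₂ := Complex.Gamma) (h := fun e : ℂ => 1/2 - e/2) 0 ?_ ?_
    · simp only [zero_div, sub_zero, add_zero]; exact hG
    · exact ((hasDerivAt_id (0:ℂ)).div_const 2).const_sub _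
  have hC : HasDerivAt (fun e : ℂ => Complex.Gamma (1/2 + e/2)) (D * (1/2)) 0 := by
    refine HasDerivAt.comp (h₂ := Complex.Gamma) (h := fun e : ℂ => 1/2 + e/2) 0 ?_ ?_
    · simp only [zero_div, sub_zero, add_zero]; exact hG
    · exact ((hasDerivAt_id (0:ℂ)).div_const 2).const_add _
  have hB : HasDerivAt (fun e : ℂ => Complex.Gamma (e + 1)) (-Real.eulerMascheroniConstant * 1) 0 := by
    refine HasDerivAt.comp (h₂ := Complex.Gamma) (h := fun e : ℂ => e + 1) 0 ?_ ?_
    · simpa using Complex.hasDerivAt_Gamma_one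
    · exact (hasDerivAt_id (0:ℂ)).add_const _
  have hE : HasDerivAt (fun e : ℂ => (x : ℂ) ^ e) ((x : ℂ) ^ (0:ℂ) * Complex.log x * 1) 0 :=
    (hasDerivAt_id (0:ℂ)).const_cpow (Or.inl hxne)
  have hZ : HasDerivAt riemannZeta (-Complex.log (2 * Real.pi) / 2) 0 := by
    rw [← deriv_riemannZeta_zero]
    exact (differentiableAt_riemannZeta (by norm_num)).hasDerivAt
  have hg0 : Complex.Gamma (1/2) ≠ 0 := Complex.Gamma_ne_zero_of_re_pos (by norm_num)
  have hGh : Complex.Gamma (1/2) = (√Real.pi : ℂ) := by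
    have := Real.Gamma_one_half_eq
    have h2 := Complex.Gamma_ofReal (1/2)
    rw [this] at h2
    simpa using h2
  have hm := (((hA.mul hB).div hC (by simpa using hg0)).mul hE).mul hZ
  have hm2 := (hasDerivAt_iff_tendsto_slope_zero.mp hm).const_mul 2
  have hzeta : Tendsto (fun e : ℂ => riemannZeta (1 + e) - 1 / e) (𝓝[≠] 0)
      (𝓝 Real.eulerMascheroniConstant) := by
    have h := tendsto_riemannZeta_sub_one_div
    have hsh : Tendsto (fun e : ℂ => 1 + e) (𝓝[≠] 0) (𝓝[≠] 1) := by
      refine tendsto_nhdsWithin_of_tendsto_nhds_of_eventually_within _ ?_ ?_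
      · have : Tendsto (fun e : ℂ => 1 + e) (𝓝 0) (𝓝 (1 + 0)) :=
          (continuous_const.add continuous_id).tendsto 0
        rw [add_zero] at this
        exact this.mono_left nhdsWithin_le_nhds
      · filter_upwards [self_mem_nhdsWithin] with e he
        simpa using he
    refine (h.comp hsh).congr ?_
    intro e
    simp
  have hsum := hzeta.add hm2
  refine Tendsto.congr' ?_ (hsum.trans (le_of_eq ?_))
  · filter_upwards [self_mem_nhdsWithin] with e he
    have he' : e ≠ 0 := he
    have hg : Complex.Gamma (e + 1) = e * Complex.Gamma e := Complex.Gamma_add_one e he'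
    simp only [Pi.mul_apply, Pi.div_apply, zero_add, smul_eq_mul, hg]
    simp only [zero_div, sub_zero, add_zero, Complex.cpow_zero, riemannZeta_zero,
      Complex.Gamma_one, div_self hg0]
    field_simp
    ring
  · congr 1
    simp only [Pi.mul_apply, Pi.div_apply, zero_div, sub_zero, add_zero, zero_add,
      Complex.cpow_zero, riemannZeta_zero, Complex.Gamma_one, hGh, hD]
    have hpi : (√Real.pi : ℂ) ≠ 0 := by rw [← hGh]; exact hg0
    have l8 : Real.log (8 * Real.pi) = 3 * Real.log 2 + Real.log Real.pi := by
      rw [Real.log_mul (by norm_num) Real.pi_pos.ne', show (8:ℝ) = 2 ^ 3 by norm_num, Real.log_pow]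
      norm_num
    have l2 : Complex.log (2 * Real.pi) = ((Real.log 2 + Real.log Real.pi : ℝ) : ℂ) := by
      rw [← Real.log_mul (by norm_num) Real.pi_pos.ne', Complex.ofReal_log (by positivity)]
      push_cast
      rfl
    have l3 : Complex.log 2 = ((Real.log 2 : ℝ) : ℂ) := by
      rw [Complex.ofReal_log (by norm_num)]
      norm_num
    have l4 : Complex.log x = ((Real.log x : ℝ) : ℂ) := (Complex.ofReal_log hx.le).symm
    rw [l8, l2, l3, l4]
    push_cast
    field_simp
    ring

lemma recip_half (a q : ℕ) [NeZero a] [NeZero q] :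
    Sh (1/2) a q - Sh (1/2) (-q) a =
      (((a : ℝ) / q : ℝ) : ℂ) ^ (-(1/2) : ℂ) *
        ((-Real.log ((a : ℝ) / q) + Real.eulerMascheroniConstant - Real.log (8 * Real.pi) : ℝ) : ℂ)
      + riemannZeta (1/2) ^ 2 + (((a : ℝ) / q : ℝ) : ℂ) ^ (-(1/2) : ℂ) * W (1/2) ((a : ℝ) / q) := by
  have ha : (0:ℝ) < a := by exact_mod_cast NeZero.pos a
  have hq : (0:ℝ) < q := by exact_mod_cast NeZero.pos q
  have hx : 0 < (a : ℝ) / q := by positivity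
  have hxne : (((a : ℝ) / q : ℝ) : ℂ) ≠ 0 := by exact_mod_cast hx.ne'
  have h12 : (1/2 : ℂ) ≠ 1 := by norm_num
  have hre : (1/2 : ℂ).re = 1/2 := by norm_num
  -- the path
  have hp0 : Tendsto (fun t : ℝ => (t : ℂ)) (𝓝[>] 0) (𝓝[≠] 0) := by
    refine tendsto_nhdsWithin_of_tendsto_nhds_of_eventually_within _ ?_ ?_
    · have : Tendsto (fun t : ℝ => (t : ℂ)) (𝓝 0) (𝓝 ((0:ℝ) : ℂ)) :=
        Complex.continuous_ofReal.tendsto 0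
      rw [Complex.ofReal_zero] at this
      exact this.mono_left nhdsWithin_le_nhds
    · filter_upwards [self_mem_nhdsWithin] with t ht
      have : (0:ℝ) < t := ht
      simpa using this.ne'
  have hp : Tendsto (fun t : ℝ => (1/2 + (t : ℂ)/2)) (𝓝[>] 0) (𝓝 (1/2)) := by
    have : Tendsto (fun t : ℝ => (1/2 + (t : ℂ)/2)) (𝓝[>] 0) (𝓝 (1/2 + 0/2)) :=
      ((hp0.mono_right nhdsWithin_le_nhds).div_const 2).const_add _
    simpa using this
  have hcS1 := (differentiableAt_Sh h12 (a : ℤ) q).continuousAt.tendsto.comp hp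
  have hcS2 := (differentiableAt_Sh h12 (-(q : ℤ)) a).continuousAt.tendsto.comp hp
  have hcW := (differentiableAt_W' (s := 1/2) (by norm_num) (by norm_num) a q).continuousAt.tendsto.comp hp
  have hcZ := (differentiableAt_riemannZeta h12).continuousAt.tendsto.comp hp
  have hcp : Tendsto ((fun s : ℂ => (((a : ℝ) / q : ℝ) : ℂ) ^ (-s)) ∘
      (fun t : ℝ => (1/2 + (t : ℂ)/2))) (𝓝[>] 0) (𝓝 ((((a : ℝ) / q : ℝ) : ℂ) ^ (-(1/2) : ℂ))) := by
    refine Tendsto.comp ?_ hp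
    have : DifferentiableAt ℂ (fun s : ℂ => (((a : ℝ) / q : ℝ) : ℂ) ^ (-s)) (1/2) :=
      DifferentiableAt.const_cpow (by fun_prop) (Or.inl hxne)
    exact this.continuousAt.tendsto
  have hM := (main_limit hx).comp hp0
  have hL := hcS1.sub hcS2
  have hR := ((hcp.mul hM).add (hcZ.pow 2)).add (hcp.mul hcW)
  refine tendsto_nhds_unique hL (hR.congr' ?_)
  have hlt : ∀ᶠ t : ℝ in 𝓝[>] 0, t < 1 :=
    nhdsWithin_le_nhds (Iio_mem_nhds (show (0:ℝ) < 1 by norm_num))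
  filter_upwards [self_mem_nhdsWithin, hlt] with t ht ht1
  have ht0 : (0:ℝ) < t := ht
  have hmem : (1/2 + (t : ℂ)/2) ∈ Udom := by
    right
    have : (1/2 + (t : ℂ)/2).re = 1/2 + t/2 := by
      have : (1/2 + (t : ℂ)/2) = ((1/2 + t/2 : ℝ) : ℂ) := by push_cast; rfl
      rw [this, Complex.ofReal_re]
    show 1/2 < _ ∧ _ < (1:ℝ)
    rw [this]
    constructor <;> linarith
  have h := recip_ext hmem a q
  simp only [Function.comp]
  rw [h]
  have e1 : 2 * (1/2 + (t : ℂ)/2) = 1 + t := by ring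
  have e2 : 1 - (1/2 + (t : ℂ)/2) = 1/2 - t/2 := by ring
  have e3 : (1 + (t : ℂ)) - 1 = t := by ring
  rw [e1, e2, e3]

end RecipAux

namespace RecipAux
open MeasureTheory Set Filter Topology

lemma cpow_neg_half {t : ℝ} (ht : 0 ≤ t) : (t : ℂ) ^ (-(1/2) : ℂ) = (((Real.sqrt t)⁻¹ : ℝ) : ℂ) := by
  rw [show (-(1/2) : ℂ) = ((-(1/2) : ℝ) : ℂ) by push_cast; rfl, ← Complex.ofReal_cpow ht,
    Real.rpow_neg ht, ← Real.sqrt_eq_rpow]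

/-- Explicit form of `G (1/2)`. -/
noncomputable def gh (y t : ℝ) : ℝ :=
  -(Real.sqrt t / (Real.sqrt (max t 0 + y) * Real.sqrt y * (Real.sqrt y + Real.sqrt (max t 0 + y))))

lemma G_half {y t : ℝ} (hy : 0 < y) (ht : 0 ≤ t) : G (1/2) y t = (gh y t : ℂ) := by
  unfold G gh
  rw [cpow_neg_half ht, cpow_neg_half hy.le, cpow_neg_half (add_nonneg ht hy.le),
    ← Complex.ofReal_sub, ← Complex.ofReal_mul]
  congr 1
  rw [max_eq_left ht]
  rcases ht.eq_or_lt with h | h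
  · subst h; simp
  have h1 : 0 < Real.sqrt t := Real.sqrt_pos.mpr h
  have h2 : 0 < Real.sqrt y := Real.sqrt_pos.mpr hy
  have h3 : 0 < Real.sqrt (t + y) := Real.sqrt_pos.mpr (by positivity)
  have e1 := Real.sq_sqrt ht
  have e2 := Real.sq_sqrt hy.le
  have e3 := Real.sq_sqrt (add_nonneg ht hy.le)
  generalize Real.sqrt t = A at *
  generalize Real.sqrt y = B at *
  generalize Real.sqrt (t + y) = D at *
  have : B + D ≠ 0 := by positivity
  field_simp
  nlinarith

lemma continuous_gh : Continuous (fun p : Set.Ioi (0:ℝ) × ℝ => gh p.1 p.2) := by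
  unfold gh
  refine Continuous.neg (Continuous.div (by fun_prop) (by fun_prop) ?_)
  rintro ⟨⟨y, hy⟩, t⟩
  have hy : 0 < y := hy
  have h2 : 0 < Real.sqrt y := Real.sqrt_pos.mpr hy
  have h3 : 0 < Real.sqrt (max t 0 + y) := Real.sqrt_pos.mpr (by positivity)
  simp only
  positivity

lemma continuousAt_G2 (s : ℂ) {θ u : ℝ} (y : Set.Ioi (0:ℝ)) (h : 0 < u + θ) :
    ContinuousAt (fun p : Set.Ioi (0:ℝ) × ℝ => G2 s p.1 (u + p.2)) (y, θ) := by
  have hy : 0 < (y:ℝ) := y.2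
  have k1 : ∀ r : ℂ, ContinuousAt (fun p : Set.Ioi (0:ℝ) × ℝ => ((u + p.2 : ℝ) : ℂ) ^ r) (y, θ) := by
    intro r
    have := Complex.continuousAt_ofReal_cpow_const (u + θ) r (Or.inr h.ne')
    exact ContinuousAt.comp (f := fun p : Set.Ioi (0:ℝ) × ℝ => u + p.2)
      (g := fun t : ℝ => (t : ℂ) ^ r) (x := (y, θ)) this (by fun_prop)
  have k2 : ∀ r : ℂ, ContinuousAt
      (fun p : Set.Ioi (0:ℝ) × ℝ => ((u + p.2 + p.1 : ℝ) : ℂ) ^ r) (y, θ) := by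
    intro r
    have := Complex.continuousAt_ofReal_cpow_const (u + θ + y) r (Or.inr (by positivity))
    exact ContinuousAt.comp (f := fun p : Set.Ioi (0:ℝ) × ℝ => u + p.2 + p.1)
      (g := fun t : ℝ => (t : ℂ) ^ r) (x := (y, θ)) this (by fun_prop)
  have k3 : ∀ r : ℂ, ContinuousAt
      (fun p : Set.Ioi (0:ℝ) × ℝ => ((p.1 : ℝ) : ℂ) ^ r) (y, θ) := by
    intro r
    have := Complex.continuousAt_ofReal_cpow_const (y:ℝ) r (Or.inr hy.ne')
    exact ContinuousAt.comp (f := fun p : Set.Ioi (0:ℝ) × ℝ => (p.1 : ℝ))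
      (g := fun t : ℝ => (t : ℂ) ^ r) (x := (y, θ)) this (by fun_prop)
  unfold G2
  have a1 := k1 (-s - 2)
  have a2 := k1 (-s - 1)
  have a3 := k1 (-s)
  have b1 := k2 (-s - 2)
  have b2 := k2 (-s - 1)
  have b3 := k2 (-s)
  have c3 := k3 (-s)
  exact (((a1.const_mul (-s - 1)).const_mul (-s)).mul (b3.sub c3)).add
    (((a2.const_mul (-s)).mul (b2.const_mul (-s))).const_mul 2) |>.add
    (a3.mul ((b1.const_mul (-s - 1)).const_mul (-s)))

lemma continuousOn_wG2 (s : ℂ) (hs : 0 < s.re) :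
    ContinuousOn (fun p : Set.Ioi (0:ℝ) × ℝ => ∫ u in Set.Ioi (1:ℝ), (wk u : ℂ) * G2 s p.1 (u + p.2))
      (Set.univ ×ˢ Set.Icc 0 1) := by
  rintro ⟨y, θ⟩ ⟨-, hθ⟩
  have hy : 0 < (y:ℝ) := y.2
  refine continuousWithinAt_of_dominated
    (bound := fun u => cG s * ((y:ℝ)/2) ^ (-s.re - 1) * u ^ (-s.re - 1)) ?_ ?_ ?_ ?_
  · filter_upwards [self_mem_nhdsWithin] with p hp
    exact aesm_wG2 s p.1.2 hp.2.1
  · have h1 : ∀ᶠ p : Set.Ioi (0:ℝ) × ℝ in 𝓝[Set.univ ×ˢ Set.Icc 0 1] (y, θ), (y:ℝ)/2 < p.1 := by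
      apply nhdsWithin_le_nhds
      have hc : ContinuousAt (fun p : Set.Ioi (0:ℝ) × ℝ => (p.1 : ℝ)) (y, θ) := by fun_prop
      exact hc.eventually (lt_mem_nhds (by simpa using hy))
    filter_upwards [self_mem_nhdsWithin, h1] with p hp hp1
    filter_upwards [ae_restrict_mem measurableSet_Ioi] with u hu
    refine (norm_wG2_le s hs p.1.2 hp.2.1 hu).trans ?_
    have hu0 : (0:ℝ) < u := lt_trans one_pos hu
    have := cG_nonneg s
    have : (p.1 : ℝ) ^ (-s.re - 1) ≤ ((y:ℝ)/2) ^ (-s.re - 1) :=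
      Real.rpow_le_rpow_of_nonpos (by positivity) hp1.le (by linarith)
    gcongr
  · refine Integrable.const_mul ?_ _
    exact integrableOn_Ioi_rpow_of_lt (by linarith) one_pos
  · filter_upwards [ae_restrict_mem measurableSet_Ioi] with u hu
    have hu0 : (1:ℝ) < u := hu
    have := continuousAt_G2 s (u := u) (θ := θ) y (by linarith [hθ.1])
    exact (this.const_mul (wk u : ℂ)).continuousWithinAt

lemma continuousOn_v :
    ContinuousOn (fun p : Set.Ioi (0:ℝ) × ℝ => v (1/2) p.2 p.1) (Set.univ ×ˢ Set.Icc 0 1) := by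
  have hc := Complex.continuous_ofReal.comp continuous_gh
  have hg : Continuous (fun p : Set.Ioi (0:ℝ) × ℝ => (gh p.1 p.2 : ℂ)) := hc
  have hi : Continuous (fun p : Set.Ioi (0:ℝ) × ℝ => ∫ t in (0:ℝ)..p.2, (gh p.1 t : ℂ)) :=
    intervalIntegral.continuous_parametric_primitive_of_continuous
      (f := fun (y : Set.Ioi (0:ℝ)) (t : ℝ) => (gh y t : ℂ)) hg
  have hi' : Continuous (fun p : Set.Ioi (0:ℝ) × ℝ => ∫ t in (0:ℝ)..(1 + p.2), (gh p.1 t : ℂ)) :=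
    hi.comp (g := fun p : Set.Ioi (0:ℝ) × ℝ => ∫ t in (0:ℝ)..p.2, (gh p.1 t : ℂ))
      (f := fun p : Set.Ioi (0:ℝ) × ℝ => (p.1, 1 + p.2)) (by fun_prop)
  have hg' : Continuous (fun p : Set.Ioi (0:ℝ) × ℝ => (gh p.1 (1 + p.2) : ℂ)) :=
    hg.comp (g := fun p : Set.Ioi (0:ℝ) × ℝ => (gh p.1 p.2 : ℂ))
      (f := fun p : Set.Ioi (0:ℝ) × ℝ => (p.1, 1 + p.2)) (by fun_prop)
  have h := (((hg.add (hg'.div_const 2)).sub hi').continuousOn).add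
    (continuousOn_wG2 (1/2) (by norm_num))
  refine h.congr ?_
  rintro ⟨y, θ⟩ ⟨-, hθ⟩
  have hy : 0 < (y:ℝ) := y.2
  simp only [v]
  rw [G_half hy hθ.1, G_half hy (by linarith [hθ.1])]
  congr 2
  refine intervalIntegral.integral_congr fun t ht => ?_
  rw [Set.uIcc_of_le (by linarith [hθ.1])] at ht
  exact G_half hy ht.1

lemma v_zero_eq_one {y : ℝ} (hy : 0 < y) : v (1/2) 0 y = v (1/2) 1 y := by
  have hs : 0 < ((1/2 : ℂ)).re := by norm_num
  have hs2 : ((1/2 : ℂ)).re < 2 := by norm_num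
  unfold v
  have t := trapezoid (1/2) hy le_rfl 1 le_rfl
  have g0 : G (1/2) y 0 = 0 := by rw [G_half hy le_rfl]; simp [gh]
  have hI0 := integrableOn_wG2 (1/2) hs hy (le_refl (0:ℝ))
  have hshift : ∫ u in Set.Ioi (1:ℝ), (wk u : ℂ) * G2 (1/2) y (u + 1)
      = ∫ u in Set.Ioi (2:ℝ), (wk u : ℂ) * G2 (1/2) y (u + 0) := by
    have h := (measurePreserving_add_right volume (1:ℝ)).setIntegral_preimage_emb
      (measurableEmbedding_addRight (1:ℝ)) (fun u => (wk u : ℂ) * G2 (1/2) y (u + 0)) (Set.Ioi 2)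
    rw [← h]
    simp only [wk_add_one, add_zero]
    congr 2
    ext u; simp only [Set.mem_Ioi, Set.mem_preimage]
    constructor <;> intro <;> linarith
  have hI1 : IntervalIntegrable (fun u => (wk u : ℂ) * G2 (1/2) y (u + 0)) volume 1 2 := by
    rw [intervalIntegrable_iff_integrableOn_Ioc_of_le (by norm_num)]
    exact hI0.mono_set Set.Ioc_subset_Ioi_self
  have hG : ∀ a b : ℝ, 0 ≤ a → a ≤ b → IntervalIntegrable (fun u => G (1/2) y u) volume a b := by
    intro a b ha hab
    have hc : Continuous (fun u => (gh y u : ℂ)) :=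
      (Complex.continuous_ofReal.comp continuous_gh).comp
        (f := fun u : ℝ => ((⟨y, hy⟩ : Set.Ioi (0:ℝ)), u)) (by fun_prop)
    refine (hc.intervalIntegrable a b).congr ?_
    intro u hu
    rw [Set.uIoc_of_le hab] at hu
    exact (G_half hy (ha.trans hu.1.le)).symm
  have hsp1 : ∫ u in Set.Ioi (1:ℝ), (wk u : ℂ) * G2 (1/2) y (u + 0) =
      (∫ u in (1:ℝ)..2, (wk u : ℂ) * G2 (1/2) y (u + 0)) +
      ∫ u in Set.Ioi (2:ℝ), (wk u : ℂ) * G2 (1/2) y (u + 0) := by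
    rw [intervalIntegral.integral_interval_add_Ioi hI0
      (hI0.mono_set (Set.Ioi_subset_Ioi (by norm_num)))]
  have hsp2 := intervalIntegral.integral_add_adjacent_intervals
    (hG 0 1 le_rfl zero_le_one) (hG 1 2 zero_le_one one_le_two)
  simp only [Nat.cast_one, add_zero] at t hI1 hsp1 hshift ⊢
  rw [intervalIntegral.integral_add (by norm_num; exact hI1)
    (by norm_num; exact hG 1 2 zero_le_one one_le_two)] at t
  norm_num at t hsp1 hsp2 hshift g0 ⊢
  rw [g0, hshift, hsp1, ← hsp2]
  linear_combination t

lemma continuousOn_vv : ContinuousOn (fun y => vv (1/2) y) (Set.Ioi 0) := by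
  rw [continuousOn_iff_continuous_restrict]
  have h1 : Continuous (fun y : Set.Ioi (0:ℝ) => v (1/2) 1 y) := by
    have := continuousOn_v.comp_continuous (f := fun y : Set.Ioi (0:ℝ) => (y, (1:ℝ)))
      (by fun_prop) (by intro x; simp)
    exact this
  have h2 : Continuous (fun y : Set.Ioi (0:ℝ) => v (1/2) (1 - Int.fract (y:ℝ)) y) := by
    refine ContinuousOn.comp_fract (s := fun y : Set.Ioi (0:ℝ) => (y:ℝ))
      (f := fun (y : Set.Ioi (0:ℝ)) (t : ℝ) => v (1/2) (1 - t) y) ?_ (by fun_prop) ?_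
    · have := continuousOn_v.comp (f := fun p : Set.Ioi (0:ℝ) × ℝ => (p.1, 1 - p.2))
        (s := Set.univ ×ˢ Set.Icc 0 1) (by fun_prop) (by
          rintro ⟨y, t⟩ ⟨-, ht⟩
          refine ⟨Set.mem_univ _, ?_⟩
          simp only [Set.mem_Icc] at ht ⊢
          constructor <;> linarith [ht.1, ht.2])
      exact this
    · intro y
      have := v_zero_eq_one y.2
      simp only [sub_zero, sub_self]
      exact this.symm
  exact h1.add h2

lemma norm_vv_half_le : ∃ C : ℝ, 0 < C ∧ ∀ y, 0 < y → ‖vv (1/2) y‖ ≤ C * y ^ (-(3/2) : ℝ) := by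
  have hs : 0 < ((1/2 : ℂ)).re := by norm_num
  have hs2 : ((1/2 : ℂ)).re < 2 := by norm_num
  have hre : ((1/2 : ℂ)).re = 1/2 := by norm_num
  refine ⟨2 * ((‖(1/2:ℂ)‖*(1+1+4/(2-(1/2:ℂ).re)) + cG (1/2)/(1/2:ℂ).re)), ?_, ?_⟩
  · have := cG_nonneg (1/2)
    rw [hre]
    norm_num
    positivity
  intro y hy
  have key : ∀ θ : ℝ, 0 < θ → θ ≤ 1 → ‖v (1/2) θ y‖ ≤
      (‖(1/2:ℂ)‖*(1+1+4/(2-(1/2:ℂ).re)) + cG (1/2)/(1/2:ℂ).re) * y ^ (-(3/2) : ℝ) := by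
    intro θ h0 h1
    refine (norm_v_le (1/2) hs hs2 hy h0 h1).trans ?_
    have e : -(1/2:ℂ).re - 1 = -(3/2) := by rw [hre]; norm_num
    rw [e]
    have : θ ^ (1 - (1/2:ℂ).re) ≤ 1 := Real.rpow_le_one h0.le h1 (by rw [hre]; norm_num)
    gcongr
  have := norm_add_le (v (1/2) 1 y) (v (1/2) (th y) y)
  have a1 := key 1 one_pos le_rfl
  have a2 := key (th y) (th_pos y) (th_le y)
  unfold vv
  linarith

lemma W_half_props : ∃ C : ℝ, 0 < C ∧ ContinuousOn (W (1/2)) (Set.Ioi 0) ∧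
    ∀ x, 0 < x → ‖W (1/2) x‖ ≤ C * x ^ (3/2 : ℝ) := by
  obtain ⟨C, hC, hv⟩ := norm_vv_half_le
  have hsum : Summable (fun l : ℕ => ((l:ℝ)+1) ^ (-(1/2) - 1 : ℝ)) := summable_aux (by norm_num)
  have hterm : ∀ (l : ℕ) (x : ℝ), 0 < x → ‖vv (1/2) (((l:ℝ)+1)/x)‖ ≤
      C * x ^ (3/2 : ℝ) * ((l:ℝ)+1) ^ (-(1/2) - 1 : ℝ) := by
    intro l x hx
    refine (hv _ (by positivity)).trans_eq ?_
    rw [Real.div_rpow (by positivity) hx.le, Real.rpow_neg hx.le,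
      show (-(1/2) - 1 : ℝ) = -(3/2) by norm_num]
    field_simp
  have hpos : 0 < ∑' l : ℕ, ((l:ℝ)+1) ^ (-(1/2) - 1 : ℝ) :=
    hsum.tsum_pos (fun l => by positivity) 0 (by positivity)
  refine ⟨C * ∑' l : ℕ, ((l:ℝ)+1) ^ (-(1/2) - 1 : ℝ), by positivity, ?_, ?_⟩
  · intro x hx
    have hx : 0 < x := hx
    have hc : ContinuousOn (W (1/2)) (Set.Ioo 0 (x + 1)) := by
      unfold W
      refine continuousOn_tsum (u := fun l : ℕ =>
        C * (x + 1) ^ (3/2 : ℝ) * ((l:ℝ)+1) ^ (-(1/2) - 1 : ℝ)) ?_ (hsum.mul_left _) ?_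
      · intro l
        refine continuousOn_vv.comp (f := fun x : ℝ => ((l:ℝ)+1)/x) ?_ ?_
        · exact continuousOn_const.div continuousOn_id (fun z hz => hz.1.ne')
        · intro z hz
          have := hz.1
          simp only [Set.mem_Ioi]
          positivity
      · intro l z hz
        refine (hterm l z hz.1).trans ?_
        have := hz.1.le
        have := hz.2.le
        gcongr
    exact (hc.continuousAt (Ioo_mem_nhds hx (by linarith))).continuousWithinAt
  · intro x hx
    unfold W
    refine (tsum_of_norm_bounded (hsum.mul_left (C * x ^ (3/2 : ℝ))).hasSum
      (fun l => hterm l x hx)).trans_eq ?_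
    rw [tsum_mul_left]
    ring

/-- The error function. -/
noncomputable def EE (x : ℝ) : ℝ := if x ≤ 0 then 0 else ((x : ℂ) ^ (-(1/2) : ℂ) * W (1/2) x).re

lemma EE_props : ∃ C : ℝ, 0 < C ∧ ContinuousOn EE (Set.Ici 0) ∧ ∀ x, 0 ≤ x → |EE x| ≤ C * x := by
  obtain ⟨C, hC, hc, hb⟩ := W_half_props
  have hbound : ∀ x, 0 ≤ x → |EE x| ≤ C * x := by
    intro x hx
    rcases hx.eq_or_lt with h | h
    · subst h; simp [EE]
    rw [EE, if_neg (not_le.mpr h)]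
    refine (Complex.abs_re_le_norm _).trans ?_
    rw [norm_mul, norm_cpow_real _ h]
    have e : ((-(1/2) : ℂ)).re = (-(1/2) : ℝ) := by norm_num
    rw [e]
    calc x ^ (-(1/2) : ℝ) * ‖W (1/2) x‖ ≤ x ^ (-(1/2) : ℝ) * (C * x ^ (3/2 : ℝ)) := by
          gcongr; exact hb x h
      _ = C * (x ^ (-(1/2) : ℝ) * x ^ (3/2 : ℝ)) := by ring
      _ = C * x := by rw [← Real.rpow_add h]; norm_num
  refine ⟨C, hC, ?_, hbound⟩
  intro x hx
  have hx : 0 ≤ x := hx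
  rcases hx.eq_or_lt with h | h
  · subst h
    have h0 : EE 0 = 0 := by simp [EE]
    unfold ContinuousWithinAt
    rw [h0]
    refine squeeze_zero_norm' (a := fun x => C * x) ?_ ?_
    · filter_upwards [self_mem_nhdsWithin] with x hx
      exact hbound x hx
    · have : Tendsto (fun x : ℝ => C * x) (𝓝 0) (𝓝 (C * 0)) := by
        exact (continuous_const.mul continuous_id).tendsto 0
      rw [mul_zero] at this
      exact this.mono_left nhdsWithin_le_nhds
  · have hca : ContinuousAt (fun x : ℝ => ((x : ℂ) ^ (-(1/2) : ℂ) * W (1/2) x).re) x := by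
      refine Complex.continuous_re.continuousAt.comp ?_
      exact (Complex.continuousAt_ofReal_cpow_const x _ (Or.inr h.ne')).mul
        (hc.continuousAt (Ioi_mem_nhds h))
    refine ContinuousAt.continuousWithinAt (hca.congr ?_)
    filter_upwards [Ioi_mem_nhds h] with z hz
    rw [EE, if_neg (not_le.mpr hz)]

end RecipAux

namespace RecipAux
open MeasureTheory Set Filter Topology
open scoped ComplexConjugate

lemma hz_conj (x : UnitAddCircle) {s : ℂ} (hs : s ≠ 1) :
    HurwitzZeta.hurwitzZeta x (conj s) = conj (HurwitzZeta.hurwitzZeta x s) := by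
  obtain ⟨θ, hθ, rfl⟩ : ∃ θ ∈ Set.Ioc (0:ℝ) 1, (θ : UnitAddCircle) = x := by
    have h := AddCircle.coe_image_Ioc_eq (1:ℝ) 0
    have hx : x ∈ ((fun t : ℝ => (t : UnitAddCircle)) '' Set.Ioc (0:ℝ) (0 + 1)) := by
      rw [h]; trivial
    simpa using hx
  have hd : ∀ z : ℂ, z ≠ 1 → DifferentiableAt ℂ (HurwitzZeta.hurwitzZeta (θ : UnitAddCircle)) z :=
    fun z hz => HurwitzZeta.differentiableAt_hurwitzZeta _ hz
  have hf_an : AnalyticOnNhd ℂ (HurwitzZeta.hurwitzZeta (θ : UnitAddCircle)) {1}ᶜ :=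
    DifferentiableOn.analyticOnNhd (fun z hz => (hd z hz).differentiableWithinAt)
      isOpen_compl_singleton
  have hg_an : AnalyticOnNhd ℂ
      (fun z => conj (HurwitzZeta.hurwitzZeta (θ : UnitAddCircle) (conj z))) {1}ᶜ :=
    DifferentiableOn.analyticOnNhd
      (fun z hz => (differentiableAt_conj_conj_iff.mpr <| hd _ <|
        (map_ne_one_iff _ (starRingEnd ℂ).injective).mpr hz).differentiableWithinAt)
      isOpen_compl_singleton
  have hgz (z : ℂ) (hz : 1 < z.re) : conj (HurwitzZeta.hurwitzZeta (θ : UnitAddCircle) (conj z))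
      = HurwitzZeta.hurwitzZeta (θ : UnitAddCircle) z := by
    have h1 := hasSum_hz (s := conj z) (by rwa [Complex.conj_re]) hθ.1 hθ.2
    have h2 := hasSum_hz (s := z) hz hθ.1 hθ.2
    rw [← h1.tsum_eq, ← h2.tsum_eq, Complex.conj_tsum]
    refine tsum_congr fun j => ?_
    have hp : (0:ℝ) ≤ (j:ℝ) + θ := by have := hθ.1; positivity
    rw [← map_neg, Complex.cpow_conj _ _ (by rw [Complex.arg_ofReal_of_nonneg hp]; exact Real.pi_ne_zero.symm),
      Complex.conj_conj, Complex.conj_ofReal]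
  have heq := hg_an.eqOn_of_preconnected_of_eventuallyEq hf_an
    (isConnected_compl_singleton_of_one_lt_rank (by simp) 1).isPreconnected
    (by norm_num : (2 : ℂ) ∈ ({1}ᶜ : Set ℂ))
    (eventuallyEq_of_mem
      ((isOpen_lt continuous_const Complex.continuous_re).mem_nhds (by norm_num)) hgz)
  simpa using congrArg (starRingEnd ℂ) (heq hs)

/-- Hurwitz zeta at `1/2`. -/
noncomputable def hh (q : ℕ) [NeZero q] (r : ZMod q) : ℂ :=
  HurwitzZeta.hurwitzZeta (ZMod.toAddCircle r) (1/2)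

lemma hh_conj (q : ℕ) [NeZero q] (r : ZMod q) : conj (hh q r) = hh q r := by
  unfold hh
  rw [← hz_conj _ (by norm_num)]
  congr 1
  rw [map_div₀, map_one, map_ofNat]

lemma hh_zero (q : ℕ) [NeZero q] : hh q 0 = riemannZeta (1/2) := by
  unfold hh
  rw [map_zero, HurwitzZeta.hurwitzZeta_zero]

lemma zeta_half_conj : conj (riemannZeta (1/2)) = riemannZeta (1/2) := by
  rw [← riemannZeta_conj]
  congr 1
  rw [map_div₀, map_one, map_ofNat]

lemma Sh_half (a : ℤ) (q : ℕ) [NeZero q] :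
    Sh (1/2) a q = (((Real.sqrt q)⁻¹ : ℝ) : ℂ) * ∑ r : ZMod q, hh q (a * r) * hh q r := by
  unfold Sh ZMod.LFunction hh
  have := cpow_neg_half (t := (q:ℝ)) (by positivity)
  rw [← this]
  simp

lemma Sh_conj (a : ℤ) (q : ℕ) [NeZero q] : conj (Sh (1/2) a q) = Sh (1/2) a q := by
  rw [Sh_half]
  simp only [map_mul, map_sum, hh_conj, Complex.conj_ofReal]

lemma L_half (q : ℕ) [NeZero q] (χ : DirichletCharacter ℂ q) :
    χ.LFunction (1/2) = (((Real.sqrt q)⁻¹ : ℝ) : ℂ) * ∑ r : ZMod q, χ r * hh q r := by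
  unfold DirichletCharacter.LFunction ZMod.LFunction hh
  have := cpow_neg_half (t := (q:ℝ)) (by positivity)
  rw [← this]
  simp

lemma char_sum (q : ℕ) [NeZero q] (b k : ZMod q) :
    ∑ χ : DirichletCharacter ℂ q, χ b * conj (χ k) =
      if IsUnit k ∧ k = b then (q.totient : ℂ) else 0 := by
  by_cases hk : IsUnit k
  · have h := DirichletCharacter.sum_char_inv_mul_char_eq ℂ hk b
    simp only [hk, true_and]
    rw [← h]
    refine Finset.sum_congr rfl fun χ _ => ?_
    have : conj (χ k) = χ k⁻¹ := by
      have h1 := MulChar.star_apply' χ k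
      rw [show conj (χ k) = star (χ k) from rfl, h1, MulChar.inv_apply]
      congr 1
      have := hk
      obtain ⟨u, rfl⟩ := this
      rw [Ring.inverse_unit, ZMod.inv_coe_unit]
    rw [this, mul_comm]
  · simp only [hk, false_and, if_false]
    refine Finset.sum_eq_zero fun χ _ => ?_
    rw [χ.map_nonunit hk]; simp

lemma sum_L (q : ℕ) [NeZero q] (hq : q.Prime) (a : ℤ) (ha : (a : ZMod q) ≠ 0) :
    ∑ χ : DirichletCharacter ℂ q, (‖χ.LFunction (1/2)‖^2 : ℂ) * χ (a : ZMod q)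
      = (q.totient : ℂ) * (((Real.sqrt q)⁻¹ : ℝ) : ℂ) ^ 2 *
        (∑ r : ZMod q, hh q (a * r) * hh q r - riemannZeta (1/2) ^ 2) := by
  haveI : Fact q.Prime := ⟨hq⟩
  have h1 : ∀ χ : DirichletCharacter ℂ q, (‖χ.LFunction (1/2)‖^2 : ℂ) * χ (a : ZMod q) =
      (((Real.sqrt q)⁻¹ : ℝ) : ℂ) ^ 2 *
        ∑ j : ZMod q, ∑ k : ZMod q, hh q j * hh q k * (χ (a * j) * conj (χ k)) := by
    intro χ
    rw [← Complex.mul_conj', L_half]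
    simp only [map_mul, map_sum, hh_conj, Complex.conj_ofReal]
    rw [show ∀ c A B x : ℂ, c * A * (c * B) * x = c ^ 2 * (A * B * x) by intros; ring,
      Finset.sum_mul_sum, Finset.sum_mul]
    congr 1
    refine Finset.sum_congr rfl fun j _ => ?_
    rw [Finset.sum_mul]
    refine Finset.sum_congr rfl fun k _ => ?_
    ring
  rw [Finset.sum_congr rfl fun χ _ => h1 χ, ← Finset.mul_sum, Finset.sum_comm]
  have h2 : ∀ j : ZMod q, ∑ χ : DirichletCharacter ℂ q, ∑ k : ZMod q,
      hh q j * hh q k * (χ (a * j) * conj (χ k)) =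
      (q.totient : ℂ) * (hh q (a * j) * hh q j - if j = 0 then riemannZeta (1/2) ^ 2 else 0) := by
    intro j
    rw [Finset.sum_comm]
    simp only [← Finset.mul_sum, char_sum]
    rw [Finset.sum_eq_single ((a : ZMod q) * j)]
    · by_cases hj : j = 0
      · subst hj
        simp [hh_zero, sq]
      · have : IsUnit ((a : ZMod q) * j) := (mul_ne_zero ha hj).isUnit
        simp only [this, hj, true_and, if_true, if_false]
        ring
    · intro k _ hk
      simp [hk]
    · simp
  rw [Finset.sum_congr rfl fun j _ => h2 j, ← Finset.mul_sum, Finset.sum_sub_distrib]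
  simp
  ring

lemma L_triv (q : ℕ) [NeZero q] (hq : q.Prime) :
    (1 : DirichletCharacter ℂ q).LFunction (1/2) =
      (1 - (((Real.sqrt q)⁻¹ : ℝ) : ℂ)) * riemannZeta (1/2) := by
  have h := DirichletCharacter.LFunctionTrivChar_eq_mul_riemannZeta (N := q) (s := 1/2) (by norm_num)
  rw [hq.primeFactors, Finset.prod_singleton] at h
  have := cpow_neg_half (t := (q:ℝ)) (by positivity)
  rw [← this]
  simpa [DirichletCharacter.LFunctionTrivChar] using h

lemma Mtw_eq (q : ℕ) [NeZero q] (hq : q.Prime) (a : ℤ) (ha : (a : ZMod q) ≠ 0) :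
    Mtw a q = Sh (1/2) a q - riemannZeta (1/2) ^ 2 *
      ((2 * (Real.sqrt q / (Nat.totient q : ℝ)) * (1 - 1 / Real.sqrt q) : ℝ) : ℂ) := by
  haveI : Fact q.Prime := ⟨hq⟩
  have h0 : ∑ χ : DirichletCharacter ℂ q, (if χ = 1 then 0 else
      (‖χ.LFunction (1/2)‖^2 : ℂ) * χ (a : ZMod q)) =
      (∑ χ : DirichletCharacter ℂ q, (‖χ.LFunction (1/2)‖^2 : ℂ) * χ (a : ZMod q))
        - ((1 - (((Real.sqrt q)⁻¹ : ℝ) : ℂ)) * riemannZeta (1/2)) ^ 2 := by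
    have e : ((‖(1 : DirichletCharacter ℂ q).LFunction (1/2)‖^2 : ℂ) *
        (1 : DirichletCharacter ℂ q) (a : ZMod q)) =
        ((1 - (((Real.sqrt q)⁻¹ : ℝ) : ℂ)) * riemannZeta (1/2)) ^ 2 := by
      rw [← Complex.mul_conj', L_triv q hq, MulChar.one_apply ha.isUnit]
      simp only [map_mul, map_sub, map_one, Complex.conj_ofReal, zeta_half_conj]
      ring
    rw [← e, eq_sub_iff_add_eq]
    rw [← Finset.add_sum_erase _ _ (Finset.mem_univ (1 : DirichletCharacter ℂ q)),
      ← Finset.add_sum_erase _ (fun χ : DirichletCharacter ℂ q =>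
        (‖χ.LFunction (1/2)‖^2 : ℂ) * χ (a : ZMod q)) (Finset.mem_univ 1)]
    rw [if_pos rfl, zero_add, add_comm]
    congr 1
    refine Finset.sum_congr rfl fun χ hχ => ?_
    rw [if_neg (Finset.ne_of_mem_erase hχ)]
  unfold Mtw
  have h0' := h0
  rw [sum_L q hq a ha] at h0'
  have hS := Sh_half a q
  have hT : (q.totient : ℝ) = (Real.sqrt q) ^ 2 - 1 := by
    rw [Nat.totient_prime hq, Real.sq_sqrt (by positivity), Nat.cast_sub hq.one_lt.le]; simp
  have hq1 : (1:ℝ) < q := by exact_mod_cast hq.one_lt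
  have hT0 : (q.totient : ℝ) ≠ 0 := by
    rw [hT, Real.sq_sqrt (by positivity)]; linarith
  have hr0 : Real.sqrt q ≠ 0 := (Real.sqrt_pos.mpr (by linarith)).ne'
  have hTc : (q.totient : ℂ) = ((Real.sqrt q : ℝ) : ℂ) ^ 2 - 1 := by exact_mod_cast congrArg (fun z : ℝ => (z : ℂ)) hT
  have hTc0 : ((Real.sqrt q : ℝ) : ℂ) ^ 2 - 1 ≠ 0 := by
    rw [← hTc]; exact_mod_cast hT0
  have hrc0 : ((Real.sqrt q : ℝ) : ℂ) ≠ 0 := by exact_mod_cast hr0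
  rw [hS]
  trans ((Real.sqrt q / (Nat.totient q : ℝ)) : ℂ) * ((q.totient : ℂ) * (((Real.sqrt q)⁻¹ : ℝ) : ℂ) ^ 2 *
        (∑ r : ZMod q, hh q (a * r) * hh q r - riemannZeta (1/2) ^ 2) - ((1 - (((Real.sqrt q)⁻¹ : ℝ) : ℂ)) * riemannZeta (1/2)) ^ 2)
  · rw [← h0']
  push_cast
  rw [hTc]
  generalize ((Real.sqrt q : ℝ) : ℂ) = R at *
  field_simp
  ring

end RecipAux

/-- The reciprocity law of Conrey and Young: the error term extends to a continuous
function on `[0,∞)` which is `O(x)` on `[0,1]`. -/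
theorem reciprocity_error_continuous :
    ∃ (E : ℝ → ℝ) (C : ℝ), ContinuousOn E (Set.Ici 0) ∧ 0 < C ∧
      (∀ x ∈ Set.Icc (0:ℝ) 1, |E x| ≤ C * x) ∧
      ∀ (a q : ℕ) (ha : a.Prime) (hq : q.Prime), a ≠ q →
        haveI : NeZero q := ⟨hq.ne_zero⟩
        haveI : NeZero a := ⟨ha.ne_zero⟩
        Mtw (a : ℤ) q - Mtw (-(q : ℤ)) a =
          (Real.sqrt ((q : ℝ) / a) *
              (Real.log ((q : ℝ) / a) + Real.eulerMascheroniConstant - Real.log (8 * π)) : ℝ)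
          + (riemannZeta (1/2))^2 *
            ((1 - 2 * (Real.sqrt q / (Nat.totient q : ℝ)) * (1 - 1 / Real.sqrt q)
                + 2 * (Real.sqrt a / (Nat.totient a : ℝ)) * (1 - 1 / Real.sqrt a) : ℝ))
          + (E ((a : ℝ) / q) : ℂ) := by
  obtain ⟨C, hC, hc, hb⟩ := RecipAux.EE_props
  refine ⟨RecipAux.EE, C, hc, hC, fun x hx => hb x hx.1, ?_⟩
  intro a q ha hq hne
  haveI : NeZero q := ⟨hq.ne_zero⟩
  haveI : NeZero a := ⟨ha.ne_zero⟩
  show Mtw (a : ℤ) q - Mtw (-(q : ℤ)) a = _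
  have h1 : (((a : ℤ)) : ZMod q) ≠ 0 := by
    rw [Int.cast_natCast, Ne, ZMod.natCast_eq_zero_iff]
    intro h
    exact hne ((Nat.prime_dvd_prime_iff_eq hq ha).mp h).symm
  have h2 : (((-(q : ℤ)) : ℤ) : ZMod a) ≠ 0 := by
    rw [Int.cast_neg, neg_ne_zero, Int.cast_natCast, Ne, ZMod.natCast_eq_zero_iff]
    intro h
    exact hne ((Nat.prime_dvd_prime_iff_eq ha hq).mp h)
  rw [RecipAux.Mtw_eq q hq _ h1, RecipAux.Mtw_eq a ha _ h2]
  have hr := RecipAux.recip_half a q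
  have ha0 : (0:ℝ) < a := by exact_mod_cast ha.pos
  have hq0 : (0:ℝ) < q := by exact_mod_cast hq.pos
  have hx : (0:ℝ) < (a:ℝ) / q := by positivity
  have e1 : Real.log ((q:ℝ)/a) = -Real.log ((a:ℝ)/q) := by
    rw [← Real.log_inv, inv_div]
  have e2 : Real.sqrt ((q:ℝ)/a) = (Real.sqrt ((a:ℝ)/q))⁻¹ := by
    rw [← Real.sqrt_inv, inv_div]
  have hE : ((RecipAux.EE ((a:ℝ)/q) : ℝ) : ℂ) =
      (((a:ℝ)/q : ℝ) : ℂ) ^ (-(1/2) : ℂ) * RecipAux.W (1/2) ((a:ℝ)/q) := by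
    rw [RecipAux.EE, if_neg (not_le.mpr hx)]
    rw [← Complex.conj_eq_iff_re]
    have hw : (((a:ℝ)/q : ℝ) : ℂ) ^ (-(1/2) : ℂ) * RecipAux.W (1/2) ((a:ℝ)/q) =
        RecipAux.Sh (1/2) a q - RecipAux.Sh (1/2) (-q) a -
        (((a:ℝ)/q:ℝ):ℂ)^(-(1/2):ℂ) * ((-Real.log ((a:ℝ)/q) + Real.eulerMascheroniConstant
          - Real.log (8*Real.pi) : ℝ):ℂ) - riemannZeta (1/2)^2 := by
      rw [hr]; ring
    rw [hw, RecipAux.cpow_neg_half hx.le]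
    simp only [map_sub, map_mul, map_pow, RecipAux.Sh_conj, RecipAux.zeta_half_conj,
      Complex.conj_ofReal]
  rw [hE, e1, e2]
  have hcp := RecipAux.cpow_neg_half hx.le
  rw [hcp] at hr ⊢
  push_cast at hr ⊢
  linear_combination hr
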